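/- Let (A, φ) be a noncommutative probability space and Φ : T(T_+(A)) → ℂ the character extending φ. Let (κ, β, ρ) be the unique triple of infinitesimal characters with Φ = exp*(ρ) = E_≺(κ) = E_≻(β). Then for every word w = a_1⋯a_n ∈ T_+(A): κ(w) = r_n(a_1,…,a_n), β(w) = b_n(a_1,…,a_n), and ρ(w) = h_n(a_1,…,a_n), the free, Boolean and monotone cumulants of (A, φ). -/

import Mathlib

open scoped BigOperators

/-- Planar rooted trees (rose trees). -/
inductive PTree : Type
  | node : List PTree → PTree

namespace PTree

/-- The single-vertex tree (a leaf). -/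
abbrev leaf : PTree := .node []

/-- Subtree at a given path from the root (entries select children). -/
def subtreeAt : List ℕ → PTree → Option PTree
  | [], t => some t
  | i :: p, node cs => (cs[i]?).bind (subtreeAt p)

/-- `p` is (the path of) a vertex of `t`. -/
def IsVertex (t : PTree) (p : List ℕ) : Prop := (subtreeAt p t).isSome

/-- `p` is a leaf of `t`. -/
def IsLeafAt (t : PTree) (p : List ℕ) : Prop := subtreeAt p t = some leaf

/-- `p` is an internal (non-leaf) vertex of `t`. -/
def IsInternalAt (t : PTree) (p : List ℕ) : Prop :=
  ∃ cs, subtreeAt p t = some (node cs) ∧ cs ≠ []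

/-- Schröder trees: every internal vertex has at least two children. -/
inductive IsSchroder : PTree → Prop
  | leaf : IsSchroder (node [])
  | node (cs : List PTree) : 2 ≤ cs.length → (∀ c ∈ cs, IsSchroder c) → IsSchroder (node cs)

/-- Number of leaves of a tree. -/
noncomputable def numLeaves (t : PTree) : ℕ := Nat.card {p : List ℕ // IsLeafAt t p}

/-- Number of sectors between consecutive leaves. -/
noncomputable def numSectors (t : PTree) : ℕ := numLeaves t - 1

/-- Number of internal vertices. -/
noncomputable def numInternal (t : PTree) : ℕ := Nat.card {p : List ℕ // IsInternalAt t p}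

/-- The set of Schröder trees with `n+1` leaves. -/
def ST (n : ℕ) : Set PTree := {t | IsSchroder t ∧ numLeaves t = n + 1}

/-- Number of surjective strictly order-preserving maps from the poset of internal
vertices of `t` (i.e. the vertex poset of the skeleton `sk(t)`, with the root minimal,
the order being the ancestor/prefix order) onto `{1, …, k}`. This is `ω_k(sk(t))`. -/
noncomputable def omegaSkK (t : PTree) (k : ℕ) : ℕ :=
  Nat.card {f : {p : List ℕ // IsInternalAt t p} → Fin k //
    Function.Surjective f ∧ ∀ v w, v.1 <+: w.1 → v ≠ w → f v < f w}

/-- The Murua coefficient `ω(sk(t))` of the skeleton of `t`. -/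
noncomputable def omegaSk (t : PTree) : ℂ :=
  ∑ k ∈ Finset.Icc 1 (numInternal t), ((-1 : ℂ) ^ (k + 1) / (k : ℂ)) * (omegaSkK t k : ℂ)

/-- The subtree of `t` at path `p` (junk value: a leaf). -/
noncomputable def subtree! (t : PTree) (p : List ℕ) : PTree := (subtreeAt p t).getD leaf

/-- Number of leaves of `t` strictly to the left of the subtree at `p`. -/
noncomputable def leavesBefore (t : PTree) (p : List ℕ) : ℕ :=
  Nat.card {q : List ℕ // IsLeafAt t q ∧ List.Lex (· < ·) q p ∧ ¬ p <+: q}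

/-- Sector number `i` (0-indexed: the sector between the `(i+1)`-st and `(i+2)`-nd leaves of `t`)
lies strictly inside the subtree of `t` rooted at `p`. -/
def SectorIn (t : PTree) (p : List ℕ) (i : ℕ) : Prop :=
  leavesBefore t p ≤ i ∧ i + 2 ≤ leavesBefore t p + numLeaves (subtree! t p)

/-- The internal vertex `v` of `t` owns sector `i`: the sector lies in the corolla at `v`,
i.e. inside the subtree at `v` but not inside the subtree at any strictly deeper vertex. -/
def OwnsSector (t : PTree) (v : List ℕ) (i : ℕ) : Prop :=
  IsInternalAt t v ∧ SectorIn t v i ∧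
    ∀ w, IsInternalAt t w → v <+: w → w ≠ v → ¬ SectorIn t w i

/-- Sectors `i` and `j` belong to the same block of the noncrossing partition `π(t)`. -/
def SameOwner (t : PTree) (i j : ℕ) : Prop := ∃ v, OwnsSector t v i ∧ OwnsSector t v j

open Classical in
/-- `φ_{π(t)}(a_1,…,a_n)`: the product over the blocks of the noncrossing partition `π(t)`
(one block per internal vertex `v`, consisting of the sectors owned by `v`) of `φ` applied to
the ordered product of the corresponding letters of `w`. -/
noncomputable def phiPi {A : Type*} [Ring A] (φ : A → ℂ) (t : PTree) (w : List A) : ℂ :=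
  ∏ᶠ v ∈ {v : List ℕ | IsInternalAt t v},
    φ ((((List.range w.length).filter fun i => OwnsSector t v i).map fun i => w.getD i 0).prod)

/-- A corolla: a root whose (at least two) children are all leaves. -/
def corolla (m : ℕ) : PTree := node (List.replicate m leaf)

/-- `t` is a corolla. -/
def IsCorolla (t : PTree) : Prop := ∃ m, 2 ≤ m ∧ t = corolla m

/-- Graft a tree `s` onto the leftmost leaf of `t`. -/
def graftLeftmost : PTree → PTree → PTree
  | node [], s => s
  | node (c :: cs), s => node (graftLeftmost c s :: cs)

/-- Trees obtained from the single-vertex tree by repeatedly grafting a corolla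
onto the leftmost leaf. -/
inductive IsBST : PTree → Prop
  | single : IsBST leaf
  | graft (t : PTree) (m : ℕ) : IsBST t → 2 ≤ m → IsBST (graftLeftmost t (corolla m))

/-- Schröder trees whose leftmost child of the root is a leaf. -/
def IsPST (t : PTree) : Prop := ∃ cs, t = node (leaf :: cs)

end PTree
section Partitions

open scoped BigOperators

/-- Set partitions of `[n] = {1,…,n}`, modeled as finpartitions of `Fin n`. -/
abbrev NPart (n : ℕ) := Finpartition (Finset.univ : Finset (Fin n))

/-- Noncrossing partitions: there are no `a < b < c < d` with `a, c` in one block and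
`b, d` in a different block. -/
def IsNoncrossing {n : ℕ} (π : NPart n) : Prop :=
  ∀ a b c d : Fin n, a < b → b < c → c < d →
    ∀ V ∈ π.parts, ∀ W ∈ π.parts, a ∈ V → c ∈ V → b ∈ W → d ∈ W → V = W

/-- Interval partitions: every block is an interval of consecutive elements. -/
def IsIntervalPart {n : ℕ} (π : NPart n) : Prop :=
  ∀ V ∈ π.parts, ∀ x ∈ V, ∀ y ∈ V, ∀ z : Fin n, x ≤ z → z ≤ y → z ∈ V

/-- Irreducible noncrossing partitions: `1` and `n` lie in the same block. -/
def IsIrreducibleNC {n : ℕ} (π : NPart n) : Prop :=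
  ∃ V ∈ π.parts, (∀ i : Fin n, i.val = 0 → i ∈ V) ∧ (∀ i : Fin n, i.val = n - 1 → i ∈ V)

/-- `W` is nested in `V`: every element of `W` lies in the interval `[min V, max V]`. -/
def NestedIn {n : ℕ} (W V : Finset (Fin n)) : Prop :=
  ∀ w ∈ W, (∃ a ∈ V, a ≤ w) ∧ (∃ b ∈ V, w ≤ b)

open Classical in
/-- The forest factorial `t(π)!` of the forest of nestings of `π`: the product, over all
blocks `V`, of the number of blocks nested in `V` (the size of the subtree rooted at `V`). -/
noncomputable def forestFactorial {n : ℕ} (π : NPart n) : ℕ :=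
  ∏ V ∈ π.parts, (π.parts.filter fun W => NestedIn W V).card

/-- `f_π(a_1,…,a_n)`: the product over the blocks `V = {i_1 < … < i_s}` of `π` of
`f(a_{i_1},…,a_{i_s})`, for a family of multilinear functionals encoded as `f : List A → ℂ`. -/
noncomputable def blockApply {A : Type*} {n : ℕ} (f : List A → ℂ) (a : Fin n → A)
    (π : NPart n) : ℂ :=
  ∏ V ∈ π.parts, f ((V.sort (· ≤ ·)).map a)

/-- `φ_π(a_1,…,a_n)` for the moment functionals `φ_m(a_1,…,a_m) = φ(a_1 ⋯ a_m)`. -/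
noncomputable def momApply {A : Type*} [Ring A] {n : ℕ} (φ : A → ℂ) (a : Fin n → A)
    (π : NPart n) : ℂ :=
  blockApply (fun l => φ l.prod) a π

/-- `ω_k(t(π))` for the nesting poset of the blocks of `π` (for irreducible `π`, this is
the vertex poset of the tree of nestings, rooted at the outermost block): the number of
surjective strictly order-preserving maps onto `{1,…,k}`. -/
noncomputable def omegaNestK {n : ℕ} (π : NPart n) (k : ℕ) : ℕ :=
  Nat.card {f : {V // V ∈ π.parts} → Fin k // Function.Surjective f ∧
    ∀ V W : {V // V ∈ π.parts}, NestedIn W.1 V.1 → V ≠ W → f V < f W}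

/-- The Murua coefficient `ω(t(π))` of the tree (forest) of nestings of `π`. -/
noncomputable def omegaNest {n : ℕ} (π : NPart n) : ℂ :=
  ∑ k ∈ Finset.Icc 1 π.parts.card, ((-1 : ℂ) ^ (k + 1) / (k : ℂ)) * (omegaNestK π k : ℂ)

/-- The noncrossing partition `π(t)` associated to a Schröder tree `t ∈ ST(n)` equals `π`:
two sectors lie in the same block of `π(t)` (i.e. have the same owning internal vertex)
iff they lie in the same block of `π`. -/
def TreePartEq {n : ℕ} (t : PTree) (π : NPart n) : Prop :=
  ∀ i j : Fin n, PTree.SameOwner t i.val j.val ↔ ∃ V ∈ π.parts, i ∈ V ∧ j ∈ V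

/-- The moment–cumulant relation defining the monotone cumulants `h`. -/
def MonotoneMC {A : Type*} [Ring A] (φ : A → ℂ) (h : List A → ℂ) : Prop :=
  ∀ (m : ℕ), 1 ≤ m → ∀ a : Fin m → A,
    φ (List.ofFn a).prod =
      ∑ᶠ π ∈ {π : NPart m | IsNoncrossing π}, (forestFactorial π : ℂ)⁻¹ * blockApply h a π

/-- The moment–cumulant relation defining the free cumulants `r`. -/
def FreeMC {A : Type*} [Ring A] (φ : A → ℂ) (r : List A → ℂ) : Prop :=
  ∀ (m : ℕ), 1 ≤ m → ∀ a : Fin m → A,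
    φ (List.ofFn a).prod = ∑ᶠ π ∈ {π : NPart m | IsNoncrossing π}, blockApply r a π

/-- The moment–cumulant relation defining the Boolean cumulants `b`. -/
def BooleanMC {A : Type*} [Ring A] (φ : A → ℂ) (b : List A → ℂ) : Prop :=
  ∀ (m : ℕ), 1 ≤ m → ∀ a : Fin m → A,
    φ (List.ofFn a).prod = ∑ᶠ π ∈ {π : NPart m | IsIntervalPart π}, blockApply b a π

end Partitions
section Words

variable {A : Type*}

/-- A word: a nonempty list of elements of `A` (an element `a_1 ⋯ a_n ∈ A^{⊗n}`, `n ≥ 1`). -/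
def WordNE (A : Type*) := {l : List A // l ≠ []}

/-- A sentence: a bar product `w_1 | ⋯ | w_m` of words, an element of the basis of the
double tensor algebra `T(T_+(A))`. The empty sentence is the unit `1`. -/
abbrev Sentence (A : Type*) := List (WordNE A)

open Classical in
/-- Turn a list of lists into a sentence (the lists arising below are always nonempty). -/
noncomputable def mkWords (ls : List (List A)) : Sentence A :=
  (ls.filter fun l => decide (l ≠ [])).attach.map fun x =>
    ⟨x.1, by have h := List.of_mem_filter x.2; simpa using h⟩

/-- Group a list of natural numbers into maximal runs of consecutive integers. -/
def natRuns : List ℕ → List (List ℕ)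
  | [] => []
  | x :: xs =>
    match natRuns xs with
    | (y :: ys) :: rest => if x + 1 = y then (x :: y :: ys) :: rest else [x] :: (y :: ys) :: rest
    | _ => [[x]]

open Classical in
/-- The two sides `a_S ⊗ a_{J^S}` of the cut of a word `w` along a subset `S` of its
letter positions: `a_S` is the subword at the positions of `S` (the unit, i.e. the empty
sentence, if `S = ∅`), and `a_{J^S}` is the bar product of the subwords corresponding to
the maximal intervals of the complement of `S`. -/
noncomputable def wordCut [Zero A] (w : WordNE A) (S : Finset (Fin w.1.length)) :
    Sentence A × Sentence A :=
  (mkWords [(S.sort (· ≤ ·)).map w.1.get],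
   mkWords (((natRuns ((((Finset.univ : Finset (Fin w.1.length)) \ S).sort (· ≤ ·)).map
      Fin.val))).map fun r => r.map fun i => w.1.getD i 0))

/-- All terms of the coproduct `Δ` of `T(T_+(A))` on a sentence:
`Δ(a_1⋯a_n) = Σ_{S ⊆ [n]} a_S ⊗ a_{J^S}`, extended multiplicatively to bar products. -/
noncomputable def sentenceCuts [Zero A] : Sentence A → List (Sentence A × Sentence A)
  | [] => [([], [])]
  | w :: ws => (Finset.univ : Finset (Finset (Fin w.1.length))).toList.flatMap fun S =>
      (sentenceCuts ws).map fun pr => ((wordCut w S).1 ++ pr.1, (wordCut w S).2 ++ pr.2)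

open Classical in
/-- The terms of the half-coproduct `Δ_≺` (sum over `S` containing the first letter,
`Δ_≺(w_1|⋯|w_m) = Δ_≺(w_1) | Δ(w_2|⋯|w_m)`). -/
noncomputable def sentenceCutsPrec [Zero A] : Sentence A → List (Sentence A × Sentence A)
  | [] => []
  | w :: ws => (((Finset.univ : Finset (Finset (Fin w.1.length))).filter
        fun S => ∃ j ∈ S, j.val = 0)).toList.flatMap fun S =>
      (sentenceCuts ws).map fun pr => ((wordCut w S).1 ++ pr.1, (wordCut w S).2 ++ pr.2)

open Classical in
/-- The terms of the half-coproduct `Δ_≻` (sum over `S` not containing the first letter). -/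
noncomputable def sentenceCutsSucc [Zero A] : Sentence A → List (Sentence A × Sentence A)
  | [] => []
  | w :: ws => (((Finset.univ : Finset (Finset (Fin w.1.length))).filter
        fun S => ∀ j ∈ S, j.val ≠ 0)).toList.flatMap fun S =>
      (sentenceCuts ws).map fun pr => ((wordCut w S).1 ++ pr.1, (wordCut w S).2 ++ pr.2)

/-- The convolution product `f * g = m_ℂ ∘ (f ⊗ g) ∘ Δ` on linear functionals of
`T(T_+(A))` (described on the basis of sentences). -/
noncomputable def convW [Zero A] (f g : Sentence A → ℂ) : Sentence A → ℂ :=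
  fun s => ((sentenceCuts s).map fun pr => f pr.1 * g pr.2).sum

/-- The left half-shuffle product `f ≺ g = m_ℂ ∘ (f ⊗ g) ∘ Δ_≺`. -/
noncomputable def precW [Zero A] (f g : Sentence A → ℂ) : Sentence A → ℂ :=
  fun s => ((sentenceCutsPrec s).map fun pr => f pr.1 * g pr.2).sum

/-- The right half-shuffle product `f ≻ g = m_ℂ ∘ (f ⊗ g) ∘ Δ_≻`. -/
noncomputable def succW [Zero A] (f g : Sentence A → ℂ) : Sentence A → ℂ :=
  fun s => ((sentenceCutsSucc s).map fun pr => f pr.1 * g pr.2).sum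

open Classical in
/-- The counit `ε` of `T(T_+(A))` as a functional. -/
noncomputable def epsW : Sentence A → ℂ := fun s => if s = [] then 1 else 0

/-- A character of `T(T_+(A))`: a unital multiplicative functional. -/
def IsCharW (Φ : Sentence A → ℂ) : Prop :=
  Φ [] = 1 ∧ ∀ s t : Sentence A, Φ (s ++ t) = Φ s * Φ t

/-- An infinitesimal character of `T(T_+(A))`: it vanishes on the unit and on bar
products of two or more words. -/
def IsInfCharW (α : Sentence A → ℂ) : Prop :=
  α [] = 0 ∧ ∀ s t : Sentence A, s ≠ [] → t ≠ [] → α (s ++ t) = 0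

/-- Convolution powers `f^{*k}` (with `f^{*0} = ε`). -/
noncomputable def convPowW [Zero A] (f : Sentence A → ℂ) : ℕ → Sentence A → ℂ
  | 0 => epsW
  | k + 1 => convW f (convPowW f k)

/-- Left half-shuffle powers `α^{≺k}`, with `α^{≺0} = ε` and `α^{≺k} = α ≺ α^{≺(k−1)}`. -/
noncomputable def precPowW [Zero A] (α : Sentence A → ℂ) : ℕ → Sentence A → ℂ
  | 0 => epsW
  | k + 1 => precW α (precPowW α k)

/-- Right half-shuffle powers `α^{≻k}`, with `α^{≻0} = ε` and `α^{≻k} = α^{≻(k−1)} ≻ α`. -/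
noncomputable def succPowW [Zero A] (α : Sentence A → ℂ) : ℕ → Sentence A → ℂ
  | 0 => epsW
  | k + 1 => succW (succPowW α k) α

/-- The convolution exponential `exp^*(α) = Σ_{k≥0} α^{*k}/k!`. -/
noncomputable def expStarW [Zero A] (α : Sentence A → ℂ) : Sentence A → ℂ :=
  fun s => ∑ᶠ k : ℕ, ((k.factorial : ℂ))⁻¹ * convPowW α k s

/-- The left half-shuffle exponential `E_≺(α) = Σ_{k≥0} α^{≺k}`. -/
noncomputable def ePrecW [Zero A] (α : Sentence A → ℂ) : Sentence A → ℂ :=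
  fun s => ∑ᶠ k : ℕ, precPowW α k s

/-- The right half-shuffle exponential `E_≻(α) = Σ_{k≥0} α^{≻k}`. -/
noncomputable def eSuccW [Zero A] (α : Sentence A → ℂ) : Sentence A → ℂ :=
  fun s => ∑ᶠ k : ℕ, succPowW α k s

/-- The character `Φ : T(T_+(A)) → ℂ` extending `φ`:
`Φ(w_1|⋯|w_m) = φ(w_1)⋯φ(w_m)` with `φ` applied to the internal product of each word. -/
noncomputable def charW [Monoid A] (φ : A → ℂ) : Sentence A → ℂ :=
  fun s => (s.map fun w => φ w.1.prod).prod

end Words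

section RunsAndWords

/-- The sum over the subsets of an embedded finset, indexed by the subsets of the source. -/
lemma sum_powerset_map {α β M : Type*} [AddCommMonoid M] (f : α ↪ β) (T : Finset α)
    (g : Finset β → M) :
    ∑ S ∈ (T.map f).powerset, g S = ∑ S ∈ T.powerset, g (S.map f) := by
  classical
  symm
  refine Finset.sum_bij (fun S _ => S.map f) ?_ ?_ ?_ ?_
  · intro S hS
    simpa using hS
  · intro S _ S' _ h
    exact Finset.map_injective f h
  · intro S hS
    obtain ⟨u, hu, rfl⟩ := Finset.subset_map_iff.1 (Finset.mem_powerset.1 hS)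
    exact ⟨u, Finset.mem_powerset.2 hu, rfl⟩
  · intro S _
    rfl

lemma natRuns_eq_nil_or_cons (l : List ℕ) :
    (l = [] ∧ natRuns l = []) ∨ ∃ y l' ys rest, l = y :: l' ∧ natRuns l = (y :: ys) :: rest := by
  induction l with
  | nil => exact Or.inl ⟨rfl, rfl⟩
  | cons x xs ih =>
    right
    rcases ih with ⟨_, h⟩ | ⟨y, l', ys, rest, _, h⟩
    · exact ⟨x, xs, [], [], rfl, by rw [natRuns, h]⟩
    · by_cases hxy : x + 1 = y
      · exact ⟨x, xs, y :: ys, rest, rfl, by rw [natRuns, h]; simp [hxy]⟩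
      · exact ⟨x, xs, [], (y :: ys) :: rest, rfl, by rw [natRuns, h]; simp [hxy]⟩

lemma natRuns_append (l₁ l₂ : List ℕ) (h : ∀ x ∈ l₁, ∀ y ∈ l₂, x + 1 < y) :
    natRuns (l₁ ++ l₂) = natRuns l₁ ++ natRuns l₂ := by
  induction l₁ with
  | nil => rfl
  | cons x xs ih =>
    have ih' := ih fun z hz y hy => h z (List.mem_cons_of_mem _ hz) y hy
    rw [List.cons_append, natRuns, ih', natRuns]
    rcases natRuns_eq_nil_or_cons xs with ⟨hx, h1⟩ | ⟨y, l', ys, rest, _, h1⟩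
    · rw [h1]
      rcases natRuns_eq_nil_or_cons l₂ with ⟨_, h2⟩ | ⟨y, l', ys, rest, hl, h2⟩
      · rw [h2]; rfl
      · rw [h2]
        have := h x (by simp) y (by simp [hl])
        have hne : x + 1 ≠ y := by omega
        simp [hne]
    · rw [h1]
      by_cases hxy : x + 1 = y <;> simp [hxy]

lemma natRuns_map_add (s : ℕ) (l : List ℕ) :
    natRuns (l.map (s + ·)) = (natRuns l).map (List.map (s + ·)) := by
  induction l with
  | nil => rfl
  | cons x xs ih =>
    rw [List.map_cons, natRuns, ih, natRuns]
    rcases natRuns_eq_nil_or_cons xs with ⟨_, h1⟩ | ⟨y, l', ys, rest, _, h1⟩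
    · simp [h1]
    · rw [h1]
      by_cases hxy : x + 1 = y
      · have : s + x + 1 = s + y := by omega
        simp [hxy, this]
      · have : ¬ s + x + 1 = s + y := by omega
        simp [hxy, this]

lemma natRuns_range' (s k : ℕ) :
    natRuns (List.range' s (k + 1)) = [List.range' s (k + 1)] := by
  induction k generalizing s with
  | zero => rfl
  | succ k ih =>
    rw [List.range'_succ, natRuns, ih (s + 1), List.range'_succ]
    simp

lemma sort_Ico_add (s k : ℕ) : (Finset.Ico s (s + k)).sort (· ≤ ·) = List.range' s k := by
  have h : (List.range' s k).toFinset = Finset.Ico s (s + k) := by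
    ext x
    simp [List.mem_range'_1]
  rw [← h, List.toFinset_sort _ List.nodup_range']
  exact List.pairwise_le_range'

lemma sort_union {T U : Finset ℕ} (h : ∀ x ∈ T, ∀ y ∈ U, x < y) :
    (T ∪ U).sort (· ≤ ·) = T.sort (· ≤ ·) ++ U.sort (· ≤ ·) := by
  have h1 : (T.sort (· ≤ ·) ++ U.sort (· ≤ ·)).toFinset = T ∪ U := by
    simp
  rw [← h1, List.toFinset_sort]
  · rw [List.pairwise_append]
    exact ⟨Finset.pairwise_sort _ _, Finset.pairwise_sort _ _, fun x hx y hy =>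
      (h x (by simpa using hx) y (by simpa using hy)).le⟩
  · rw [List.nodup_append]
    exact ⟨Finset.sort_nodup _ _, Finset.sort_nodup _ _, fun x hx y hy =>
      (h x (by simpa using hx) y (by simpa using hy)).ne⟩

variable {A : Type*}

/-- The list of letters of a word. -/
def WordNE.letters (w : WordNE A) : List A := w.1

lemma WordNE.letters_injective : Function.Injective (WordNE.letters (A := A)) :=
  fun _ _ h => Subtype.ext h

lemma map_letters_mkWords (ls : List (List A)) :
    (mkWords ls).map WordNE.letters = ls.filter fun l => !l.isEmpty := by
  classical
  have h1 : (ls.filter fun l => !l.isEmpty) = ls.filter fun l => decide (l ≠ []) := by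
    congr 1
    funext l
    cases l <;> simp
  have h2 : (mkWords ls).map WordNE.letters =
      (ls.filter fun l => decide (l ≠ [])).attach.map Subtype.val := by
    refine List.map_map.trans ?_
    congr 1
  rw [h1, h2, List.attach_map_subtype_val]

lemma mkWords_append (l₁ l₂ : List (List A)) :
    mkWords (l₁ ++ l₂) = mkWords l₁ ++ mkWords l₂ := by
  apply List.map_injective_iff.2 WordNE.letters_injective
  rw [List.map_append, map_letters_mkWords, map_letters_mkWords, map_letters_mkWords,
    List.filter_append]

lemma mkWords_singleton (l : List A) (h : l ≠ []) : mkWords [l] = [⟨l, h⟩] := by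
  apply List.map_injective_iff.2 WordNE.letters_injective
  rw [map_letters_mkWords]
  have : List.map WordNE.letters [(⟨l, h⟩ : WordNE A)] = [l] := rfl
  rw [this]
  simp [h]

lemma mkWords_singleton_nil : mkWords [([] : List A)] = [] := by
  apply List.map_injective_iff.2 WordNE.letters_injective
  rw [map_letters_mkWords]
  simp

lemma mkWords_nil : mkWords ([] : List (List A)) = [] := by
  apply List.map_injective_iff.2 WordNE.letters_injective
  rw [map_letters_mkWords]
  simp

/-- The subword of `a 0, a 1, …` at the positions of `S`, as a sentence with at most one word. -/
noncomputable def subwordAt (a : ℕ → A) (S : Finset ℕ) : Sentence A :=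
  mkWords [(S.sort (· ≤ ·)).map a]

/-- The bar product of the subwords of `a 0, a 1, …` at the maximal runs of `T`. -/
noncomputable def sentenceAt (a : ℕ → A) (T : Finset ℕ) : Sentence A :=
  mkWords ((natRuns (T.sort (· ≤ ·))).map (List.map a))

lemma subwordAt_empty (a : ℕ → A) : subwordAt a ∅ = [] := by
  simp [subwordAt, mkWords_singleton_nil]

lemma sentenceAt_empty (a : ℕ → A) : sentenceAt a ∅ = [] := by
  simp [sentenceAt, natRuns, mkWords_nil]

lemma subwordAt_nonempty (a : ℕ → A) {S : Finset ℕ} (hS : S.Nonempty) :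
    ∃ w : WordNE A, subwordAt a S = [w] := by
  have : (S.sort (· ≤ ·)).map a ≠ [] := by
    intro h
    have h2 := congrArg List.length h
    simp at h2
    exact hS.ne_empty h2
  exact ⟨_, mkWords_singleton _ this⟩

lemma sentenceAt_union (a : ℕ → A) {T U : Finset ℕ} (h : ∀ x ∈ T, ∀ y ∈ U, x + 1 < y) :
    sentenceAt a (T ∪ U) = sentenceAt a T ++ sentenceAt a U := by
  unfold sentenceAt
  rw [sort_union fun x hx y hy => by have := h x hx y hy; omega, natRuns_append,
    List.map_append, mkWords_append]
  simpa using h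

lemma sentenceAt_Ico (a : ℕ → A) (s e : ℕ) :
    sentenceAt a (Finset.Ico s e) = subwordAt a (Finset.Ico s e) := by
  rcases Nat.lt_or_ge s e with h | h
  · obtain ⟨k, rfl⟩ : ∃ k, e = s + (k + 1) := ⟨e - s - 1, by omega⟩
    rw [sentenceAt, subwordAt, sort_Ico_add, natRuns_range']
    rfl
  · rw [Finset.Ico_eq_empty (by omega), sentenceAt_empty, subwordAt_empty]

/-- Every nonempty set of naturals starts with a maximal run. -/
lemma exists_first_run {T : Finset ℕ} (hT : T.Nonempty) :
    ∃ s e : ℕ, ∃ U : Finset ℕ, s < e ∧ (∀ y ∈ U, e < y) ∧ T = Finset.Ico s e ∪ U := by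
  classical
  have hex : ∃ e, T.min' hT ≤ e ∧ e ∉ T := by
    refine ⟨T.max' hT + 1, ?_, fun h => ?_⟩
    · have := T.min'_le_max' hT
      omega
    · have := T.le_max' _ h
      omega
  have h1 := Nat.find_spec hex
  have h2 : ∀ m < Nat.find hex, T.min' hT ≤ m → m ∈ T := fun m hm hle => by
    by_contra hmT
    exact Nat.find_min hex hm ⟨hle, hmT⟩
  refine ⟨T.min' hT, Nat.find hex, T.filter (Nat.find hex < ·), ?_, ?_, ?_⟩
  · refine lt_of_le_of_ne h1.1 fun h => h1.2 ?_
    rw [← h]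
    exact T.min'_mem hT
  · intro y hy
    exact (Finset.mem_filter.1 hy).2
  · ext x
    simp only [Finset.mem_union, Finset.mem_Ico, Finset.mem_filter]
    constructor
    · intro hx
      have h3 := T.min'_le x hx
      have h4 : x ≠ Nat.find hex := fun h => h1.2 (h ▸ hx)
      rcases lt_or_gt_of_ne h4 with h5 | h5
      · exact Or.inl ⟨h3, h5⟩
      · exact Or.inr ⟨hx, h5⟩
    · rintro (⟨h3, h4⟩ | h)
      · exact h2 x h4 h3
      · exact h.1

lemma sentenceAt_ne_nil (a : ℕ → A) {T : Finset ℕ} (hT : T.Nonempty) : sentenceAt a T ≠ [] := by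
  obtain ⟨s, e, U, hse, hU, rfl⟩ := exists_first_run hT
  obtain ⟨w, hw⟩ := subwordAt_nonempty a (Finset.nonempty_Ico.2 hse)
  rw [sentenceAt_union a, sentenceAt_Ico, hw]
  · simp
  · intro x hx y hy
    have := hU y hy
    have := Finset.mem_Ico.1 hx
    omega

/-- Cutting the word at the run `Ico s (s + n)`. -/
lemma wordCut_eq [Zero A] (a : ℕ → A) (s : ℕ) (w : WordNE A)
    (hw : w.1 = (List.range' s w.1.length).map a) (S : Finset (Fin w.1.length)) :
    wordCut w S =
      (subwordAt a (S.map (Fin.valEmbedding.trans (addLeftEmbedding s))),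
       sentenceAt a (Finset.Ico s (s + w.1.length) \
         S.map (Fin.valEmbedding.trans (addLeftEmbedding s)))) := by
  classical
  have hsort : ∀ U : Finset (Fin w.1.length),
      (U.map (Fin.valEmbedding.trans (addLeftEmbedding s))).sort (· ≤ ·) =
        ((U.sort (· ≤ ·)).map Fin.val).map (s + ·) := by
    intro U
    rw [List.map_map]
    refine (Finset.map_sort (Fin.valEmbedding.trans (addLeftEmbedding s)) U (· ≤ ·) (· ≤ ·)
      ?_).symm
    intro x _ y _
    change x ≤ y ↔ s + x.1 ≤ s + y.1
    simp
  have hget : ∀ i (hi : i < w.1.length), w.1[i] = a (s + i) := by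
    intro i hi
    rw [List.getElem_of_eq hw hi]
    simp
  have hcompl : Finset.Ico s (s + w.1.length) \
         S.map (Fin.valEmbedding.trans (addLeftEmbedding s)) =
      (Finset.univ \ S).map (Fin.valEmbedding.trans (addLeftEmbedding s)) := by
    rw [Finset.map_sdiff]
    congr 1
    ext x
    simp only [Finset.mem_Ico, Finset.mem_map, Finset.mem_univ, true_and,
      Function.Embedding.trans_apply, Fin.valEmbedding_apply, addLeftEmbedding_apply]
    constructor
    · intro hx
      exact ⟨⟨x - s, by omega⟩, by simp; omega⟩
    · rintro ⟨i, rfl⟩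
      have := i.2
      omega
  have hmem : ∀ (l : List ℕ), ∀ r ∈ natRuns l, ∀ i ∈ r, i ∈ l := by
    intro l
    induction l with
    | nil => simp [natRuns]
    | cons x xs ih =>
      intro r hr i hi
      rw [natRuns] at hr
      rcases natRuns_eq_nil_or_cons xs with ⟨_, h1⟩ | ⟨y, l', ys, rest, _, h1⟩
      · rw [h1] at hr
        simp at hr
        subst hr
        simp at hi
        simp [hi]
      · rw [h1] at hr ih
        by_cases hxy : x + 1 = y
        · simp only [hxy, if_true, List.mem_cons] at hr
          rcases hr with rfl | hr
          · rcases List.mem_cons.1 hi with rfl | hi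
            · simp
            · exact List.mem_cons_of_mem _ (ih _ (by simp) i hi)
          · exact List.mem_cons_of_mem _ (ih r (by simp [hr]) i hi)
        · simp only [hxy, if_false, List.mem_cons] at hr
          rcases hr with rfl | hr
          · simp at hi
            simp [hi]
          · exact List.mem_cons_of_mem _ (ih r (by simpa using hr) i hi)
  refine Prod.ext ?_ ?_
  · simp only [wordCut, subwordAt, hsort, List.map_map]
    congr 2
    apply List.map_congr_left
    intro i _
    simp [hget]
  · simp only [wordCut, hcompl, sentenceAt, hsort, natRuns_map_add]
    rw [List.map_map]
    congr 1
    apply List.map_congr_left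
    intro r hr
    simp only [Function.comp, List.map_map]
    apply List.map_congr_left
    intro i hi
    have h3 := hmem _ r hr i hi
    simp only [List.mem_map] at h3
    obtain ⟨j, _, rfl⟩ := h3
    simp [hget]

end RunsAndWords

section Convolution

variable {A : Type*}

lemma sum_flatMap_toList {ι β γ : Type*} (s : Finset ι) (L : List β) (f : ι → β → γ)
    (G : γ → ℂ) :
    ((s.toList.flatMap fun S => L.map (f S)).map G).sum =
      ∑ S ∈ s, (L.map fun x => G (f S x)).sum := by
  rw [← Finset.sum_map_toList]
  induction s.toList with
  | nil => rfl
  | cons x xs ih =>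
    rw [List.flatMap_cons, List.map_append, List.sum_append, ih]
    simp [Function.comp_def]

lemma epsW_nil : epsW ([] : Sentence A) = 1 := by simp [epsW]

lemma epsW_of_ne_nil {s : Sentence A} (h : s ≠ []) : epsW s = 0 := by simp [epsW, h]

/-- The word at a nonempty run. -/
lemma exists_sentenceAt_Ico (a : ℕ → A) {s e : ℕ} (h : s < e) :
    ∃ w : WordNE A, sentenceAt a (Finset.Ico s e) = [w] ∧ s + w.1.length = e ∧
      w.1 = (List.range' s w.1.length).map a := by
  obtain ⟨k, rfl⟩ : ∃ k, e = s + k := ⟨e - s, by omega⟩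
  refine ⟨⟨(List.range' s k).map a, ?_⟩, ?_, ?_, ?_⟩
  · intro h0
    have := congrArg List.length h0
    simp at this
    omega
  · rw [sentenceAt_Ico, subwordAt]
    have : ((Finset.Ico s (s + k)).sort (· ≤ ·)).map a ≠ [] := by
      intro h0
      have := congrArg List.length h0
      simp at this
      omega
    rw [mkWords_singleton _ this]
    congr 2
    rw [sort_Ico_add]
  · simp
  · simp

lemma run_add_one_lt {s e : ℕ} {U : Finset ℕ} (hU : ∀ y ∈ U, e < y) {S : Finset ℕ}
    (hS : S ⊆ Finset.Ico s e) : ∀ x ∈ S, ∀ y ∈ U, x + 1 < y := by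
  intro x hx y hy
  have := Finset.mem_Ico.1 (hS hx)
  have := hU y hy
  omega

/-- `S` lies in a single run of `T`: every element between two elements of `S` is in `T`. -/
def InRun {ι : Type*} [LinearOrder ι] (S T : Finset ι) : Prop :=
  ∀ x ∈ S, ∀ y ∈ S, ∀ z, x ≤ z → z ≤ y → z ∈ T

lemma InRun.subset {ι : Type*} [LinearOrder ι] {S T : Finset ι} (h : InRun S T) : S ⊆ T :=
  fun x hx => h x hx x hx x le_rfl le_rfl

lemma IsInfCharW.append_of_left_ne {α : Sentence A → ℂ} (hα : IsInfCharW α)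
    {s : Sentence A} (hs : s ≠ []) (t : Sentence A) : α (s ++ t) = α s * epsW t := by
  by_cases ht : t = []
  · simp [ht, epsW_nil]
  · rw [hα.2 s t hs ht, epsW_of_ne_nil ht, mul_zero]

lemma subwordAt_ne_nil (a : ℕ → A) {S : Finset ℕ} (hS : S.Nonempty) : subwordAt a S ≠ [] := by
  obtain ⟨w, hw⟩ := subwordAt_nonempty a hS
  simp [hw]

lemma inRun_run_union_iff {s e : ℕ} {U S : Finset ℕ} (hU : ∀ y ∈ U, e < y) :
    InRun S (Finset.Ico s e ∪ U) ↔ S ⊆ Finset.Ico s e ∨ InRun S U := by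
  constructor
  · intro h
    by_cases hI : ∃ x ∈ S, x ∈ Finset.Ico s e
    · left
      obtain ⟨x, hx, hxI⟩ := hI
      intro y hy
      rcases Finset.mem_union.1 (h.subset hy) with h1 | h1
      · exact h1
      · exfalso
        have h2 := hU y h1
        have h3 := Finset.mem_Ico.1 hxI
        have h4 := h x hx y hy e h3.2.le h2.le
        rcases Finset.mem_union.1 h4 with h5 | h5
        · simp at h5
        · exact lt_irrefl _ (hU e h5)
    · right
      push Not at hI
      intro x hx y hy z hxz hzy
      have hxU : x ∈ U := (Finset.mem_union.1 (h.subset hx)).resolve_left (hI x hx)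
      refine (Finset.mem_union.1 (h x hx y hy z hxz hzy)).resolve_left fun h1 => ?_
      have := hU x hxU
      have := Finset.mem_Ico.1 h1
      omega
  · rintro (h | h) x hx y hy z hxz hzy
    · have h1 := Finset.mem_Ico.1 (h hx)
      have h2 := Finset.mem_Ico.1 (h hy)
      exact Finset.mem_union_left _ (Finset.mem_Ico.2 ⟨by omega, by omega⟩)
    · exact Finset.mem_union_right _ (h x hx y hy z hxz hzy)

lemma sdiff_run_union {s e : ℕ} {U S : Finset ℕ} (hU : ∀ y ∈ U, e < y)
    (hS : S ⊆ Finset.Ico s e) :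
    (Finset.Ico s e ∪ U) \ S = (Finset.Ico s e \ S) ∪ U := by
  rw [Finset.union_sdiff_distrib]
  congr 1
  rw [Finset.sdiff_eq_self_iff_disjoint, Finset.disjoint_left]
  intro x hx hxS
  have := hU x hx
  have := Finset.mem_Ico.1 (hS hxS)
  omega

/-- An interval of naturals, as a half-open interval. -/
lemma eq_Ico_of_inRun_self {S : Finset ℕ} {s : ℕ} (hs : s ∈ S) (hmin : ∀ x ∈ S, s ≤ x)
    (h : InRun S S) : ∃ c, s < c ∧ S = Finset.Ico s c := by
  refine ⟨S.max' ⟨s, hs⟩ + 1, ?_, ?_⟩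
  · have := S.le_max' s hs
    omega
  · ext x
    rw [Finset.mem_Ico]
    constructor
    · intro hx
      have := S.le_max' x hx
      exact ⟨hmin x hx, by omega⟩
    · rintro ⟨h1, h2⟩
      exact h s hs _ (S.max'_mem ⟨s, hs⟩) x h1 (by omega)

lemma infChar_sentenceAt_eq_zero {α : Sentence A → ℂ} (hα : IsInfCharW α) (a : ℕ → A)
    {S : Finset ℕ} (h : ¬ InRun S S) : α (sentenceAt a S) = 0 := by
  unfold InRun at h
  push Not at h
  obtain ⟨x, hx, y, hy, z, hxz, hzy, hz⟩ := h
  have hS : S = S.filter (· < z) ∪ S.filter (z < ·) := by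
    ext u
    simp only [Finset.mem_union, Finset.mem_filter]
    constructor
    · intro hu
      have : u ≠ z := fun h => hz (h ▸ hu)
      rcases lt_or_gt_of_ne this with h | h
      · exact Or.inl ⟨hu, h⟩
      · exact Or.inr ⟨hu, h⟩
    · rintro (h | h) <;> exact h.1
  have hxz' : x < z := lt_of_le_of_ne hxz fun h => hz (h ▸ hx)
  have hzy' : z < y := lt_of_le_of_ne hzy fun h => hz (h ▸ hy)
  rw [hS, sentenceAt_union a]
  · exact hα.2 _ _ (sentenceAt_ne_nil a ⟨x, Finset.mem_filter.2 ⟨hx, hxz'⟩⟩)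
      (sentenceAt_ne_nil a ⟨y, Finset.mem_filter.2 ⟨hy, hzy'⟩⟩)
  · intro u hu v hv
    have := (Finset.mem_filter.1 hu).2
    have := (Finset.mem_filter.1 hv).2
    omega

section Zero

variable [Zero A]

lemma word_eq_map_range' (w : WordNE A) :
    w.1 = (List.range' 0 w.1.length).map fun i => w.1.getD i 0 := by
  apply List.ext_getElem
  · simp
  · intro i h1 h2
    simp [h1]

lemma sentenceAt_word (w : WordNE A) :
    sentenceAt (fun i => w.1.getD i 0) (Finset.Ico 0 (0 + w.1.length)) = [w] := by
  rw [sentenceAt_Ico, subwordAt, sort_Ico_add, ← word_eq_map_range']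
  exact mkWords_singleton _ w.2

lemma map_univ_run (s n : ℕ) :
    (Finset.univ : Finset (Fin n)).map (Fin.valEmbedding.trans (addLeftEmbedding s)) =
      Finset.Ico s (s + n) := by
  ext x
  simp only [Finset.mem_Ico, Finset.mem_map, Finset.mem_univ, true_and,
    Function.Embedding.trans_apply, Fin.valEmbedding_apply, addLeftEmbedding_apply]
  constructor
  · rintro ⟨i, rfl⟩
    have := i.2
    omega
  · intro hx
    exact ⟨⟨x - s, by omega⟩, by simp; omega⟩

lemma wordCut_empty (w : WordNE A) : wordCut w ∅ = ([], [w]) := by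
  rw [wordCut_eq _ 0 w (word_eq_map_range' w)]
  simp only [Finset.map_empty, subwordAt_empty, Finset.sdiff_empty, sentenceAt_word]

lemma wordCut_univ (w : WordNE A) : wordCut w Finset.univ = ([w], []) := by
  rw [wordCut_eq _ 0 w (word_eq_map_range' w), map_univ_run, Finset.sdiff_self, sentenceAt_empty,
    ← sentenceAt_Ico, sentenceAt_word]

lemma wordCut_fst_ne_nil (w : WordNE A) {S : Finset (Fin w.1.length)} (hS : S ≠ ∅) :
    (wordCut w S).1 ≠ [] := by
  rw [wordCut_eq _ 0 w (word_eq_map_range' w)]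
  obtain ⟨v, hv⟩ := subwordAt_nonempty (fun i => w.1.getD i 0)
    ((Finset.nonempty_iff_ne_empty.2 hS).map
      (f := Fin.valEmbedding.trans (addLeftEmbedding 0)))
  simp only [hv]
  simp

lemma wordCut_snd_ne_nil (w : WordNE A) {S : Finset (Fin w.1.length)} (hS : S ≠ Finset.univ) :
    (wordCut w S).2 ≠ [] := by
  rw [wordCut_eq _ 0 w (word_eq_map_range' w)]
  apply sentenceAt_ne_nil
  rw [← map_univ_run, ← Finset.map_sdiff, Finset.map_nonempty, Finset.sdiff_nonempty]
  intro h
  exact hS (Finset.univ_subset_iff.1 h)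

/-- `ε` is a left unit of the coproduct. -/
lemma sum_cuts_epsW_left (s : Sentence A) (G : Sentence A → ℂ) :
    ((sentenceCuts s).map fun pr => epsW pr.1 * G pr.2).sum = G s := by
  induction s generalizing G with
  | nil => simp [sentenceCuts, epsW_nil]
  | cons w ws ih =>
    rw [sentenceCuts, sum_flatMap_toList, Finset.sum_eq_single ∅]
    · rw [wordCut_empty]
      exact ih fun s => G (w :: s)
    · intro S _ hS
      apply List.sum_eq_zero
      simp only [List.mem_map]
      rintro _ ⟨pr, _, rfl⟩
      rw [epsW_of_ne_nil, zero_mul]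
      simp [wordCut_fst_ne_nil w hS]
    · simp

/-- `ε` is a right unit of the coproduct. -/
lemma sum_cuts_epsW_right (s : Sentence A) (G : Sentence A → ℂ) :
    ((sentenceCuts s).map fun pr => G pr.1 * epsW pr.2).sum = G s := by
  induction s generalizing G with
  | nil => simp [sentenceCuts, epsW_nil]
  | cons w ws ih =>
    rw [sentenceCuts, sum_flatMap_toList, Finset.sum_eq_single Finset.univ]
    · rw [wordCut_univ]
      exact ih fun s => G (w :: s)
    · intro S _ hS
      apply List.sum_eq_zero
      simp only [List.mem_map]
      rintro _ ⟨pr, _, rfl⟩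
      rw [epsW_of_ne_nil, mul_zero]
      simp [wordCut_snd_ne_nil w hS]
    · simp

/-- Reindexing the cuts of the word at the run `Ico s e` by subsets of the run. -/
lemma sum_wordCut (a : ℕ → A) {s e : ℕ} (w : WordNE A) (he : s + w.1.length = e)
    (hw : w.1 = (List.range' s w.1.length).map a) (p : Finset (Fin w.1.length) → Prop)
    [DecidablePred p] (q : Finset ℕ → Prop) [DecidablePred q]
    (hpq : ∀ S, p S ↔ q (S.map (Fin.valEmbedding.trans (addLeftEmbedding s))))
    (g : Sentence A × Sentence A → ℂ) :
    ∑ S ∈ Finset.univ.filter p, g (wordCut w S) =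
      ∑ S ∈ (Finset.Ico s e).powerset.filter q,
        g (subwordAt a S, sentenceAt a (Finset.Ico s e \ S)) := by
  subst he
  rw [Finset.sum_filter, Finset.sum_filter]
  nth_rewrite 1 [← map_univ_run]
  rw [sum_powerset_map, Finset.powerset_univ]
  refine Finset.sum_congr rfl fun S _ => ?_
  rw [wordCut_eq a s w hw]
  by_cases h : p S
  · rw [if_pos h, if_pos ((hpq S).1 h)]
  · rw [if_neg h, if_neg fun h' => h ((hpq S).2 h')]

lemma sum_sentenceCuts_run (a : ℕ → A) {s e : ℕ} {U : Finset ℕ} (hse : s < e)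
    (hU : ∀ y ∈ U, e < y) (G : Sentence A × Sentence A → ℂ) :
    ((sentenceCuts (sentenceAt a (Finset.Ico s e ∪ U))).map G).sum =
      ∑ S ∈ (Finset.Ico s e).powerset, ((sentenceCuts (sentenceAt a U)).map fun pr =>
        G (subwordAt a S ++ pr.1, sentenceAt a (Finset.Ico s e \ S) ++ pr.2)).sum := by
  obtain ⟨w, hw, he, hw2⟩ := exists_sentenceAt_Ico a hse
  rw [sentenceAt_union a (run_add_one_lt hU subset_rfl), hw, List.singleton_append, sentenceCuts,
    sum_flatMap_toList]
  have := sum_wordCut a w he hw2 (fun _ => True) (fun _ => True) (fun _ => Iff.rfl)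
    (fun c => ((sentenceCuts (sentenceAt a U)).map fun pr => G (c.1 ++ pr.1, c.2 ++ pr.2)).sum)
  simpa only [Finset.filter_true] using this

open Classical in
lemma sum_sentenceCutsPrec_run (a : ℕ → A) {s e : ℕ} {U : Finset ℕ} (hse : s < e)
    (hU : ∀ y ∈ U, e < y) (G : Sentence A × Sentence A → ℂ) :
    ((sentenceCutsPrec (sentenceAt a (Finset.Ico s e ∪ U))).map G).sum =
      ∑ S ∈ (Finset.Ico s e).powerset.filter (s ∈ ·),
        ((sentenceCuts (sentenceAt a U)).map fun pr =>
        G (subwordAt a S ++ pr.1, sentenceAt a (Finset.Ico s e \ S) ++ pr.2)).sum := by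
  obtain ⟨w, hw, he, hw2⟩ := exists_sentenceAt_Ico a hse
  rw [sentenceAt_union a (run_add_one_lt hU subset_rfl), hw, List.singleton_append,
    sentenceCutsPrec, sum_flatMap_toList]
  refine sum_wordCut a w he hw2 (fun S => ∃ j ∈ S, j.val = 0) (s ∈ ·) (fun S => ?_)
    (fun c => ((sentenceCuts (sentenceAt a U)).map fun pr => G (c.1 ++ pr.1, c.2 ++ pr.2)).sum)
  simp

open Classical in
lemma sum_sentenceCutsSucc_run (a : ℕ → A) {s e : ℕ} {U : Finset ℕ} (hse : s < e)
    (hU : ∀ y ∈ U, e < y) (G : Sentence A × Sentence A → ℂ) :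
    ((sentenceCutsSucc (sentenceAt a (Finset.Ico s e ∪ U))).map G).sum =
      ∑ S ∈ (Finset.Ico s e).powerset.filter (s ∉ ·),
        ((sentenceCuts (sentenceAt a U)).map fun pr =>
        G (subwordAt a S ++ pr.1, sentenceAt a (Finset.Ico s e \ S) ++ pr.2)).sum := by
  obtain ⟨w, hw, he, hw2⟩ := exists_sentenceAt_Ico a hse
  rw [sentenceAt_union a (run_add_one_lt hU subset_rfl), hw, List.singleton_append,
    sentenceCutsSucc, sum_flatMap_toList]
  refine sum_wordCut a w he hw2 (fun S => ∀ j ∈ S, j.val ≠ 0) (s ∉ ·) (fun S => ?_)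
    (fun c => ((sentenceCuts (sentenceAt a U)).map fun pr => G (c.1 ++ pr.1, c.2 ++ pr.2)).sum)
  simp

open Classical in
lemma precW_sentenceAt {α : Sentence A → ℂ} (hα : IsInfCharW α) (F : Sentence A → ℂ)
    (a : ℕ → A) {T : Finset ℕ} {m : ℕ} (hm : m ∈ T) (hmin : ∀ x ∈ T, m ≤ x) :
    precW α F (sentenceAt a T) =
      ∑ S ∈ T.powerset.filter (fun S => m ∈ S ∧ InRun S T),
        α (subwordAt a S) * F (sentenceAt a (T \ S)) := by
  obtain ⟨s, e, U, hse, hU, rfl⟩ := exists_first_run ⟨m, hm⟩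
  have hms : m = s := by
    apply le_antisymm
    · exact hmin s (by simp [hse])
    · rcases Finset.mem_union.1 hm with h | h
      · exact (Finset.mem_Ico.1 h).1
      · have := hU m h
        omega
  subst hms
  rw [precW, sum_sentenceCutsPrec_run a hse hU]
  have hset : (Finset.Ico m e ∪ U).powerset.filter
      (fun S => m ∈ S ∧ InRun S (Finset.Ico m e ∪ U)) =
      (Finset.Ico m e).powerset.filter (m ∈ ·) := by
    ext S
    simp only [Finset.mem_filter, Finset.mem_powerset, inRun_run_union_iff hU]
    constructor
    · rintro ⟨_, h2, h3 | h3⟩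
      · exact ⟨h3, h2⟩
      · have := hU m (h3.subset h2)
        omega
    · rintro ⟨h1, h2⟩
      exact ⟨h1.trans Finset.subset_union_left, h2, Or.inl h1⟩
  rw [hset]
  refine Finset.sum_congr rfl fun S hS => ?_
  obtain ⟨hS1, hS2⟩ := Finset.mem_filter.1 hS
  rw [Finset.mem_powerset] at hS1
  simp only [hα.append_of_left_ne (subwordAt_ne_nil a ⟨m, hS2⟩), mul_assoc]
  rw [List.sum_map_mul_left,
    sum_cuts_epsW_left _ fun t => F (sentenceAt a (Finset.Ico m e \ S) ++ t),
    sdiff_run_union hU hS1,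
    sentenceAt_union a (run_add_one_lt hU Finset.sdiff_subset)]

open Classical in
lemma convW_sentenceAt {α : Sentence A → ℂ} (hα : IsInfCharW α) (F : Sentence A → ℂ)
    (a : ℕ → A) (T : Finset ℕ) :
    convW α F (sentenceAt a T) =
      ∑ S ∈ T.powerset.filter (fun S => S.Nonempty ∧ InRun S T),
        α (subwordAt a S) * F (sentenceAt a (T \ S)) := by
  induction hn : T.card using Nat.strong_induction_on generalizing T F with
  | _ n ih =>
  rcases T.eq_empty_or_nonempty with rfl | hT
  · rw [sentenceAt_empty]
    simp [convW, sentenceCuts, hα.1, Finset.filter_singleton]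
  obtain ⟨s, e, U, hse, hU, rfl⟩ := exists_first_run hT
  have hdisj : Disjoint (Finset.Ico s e) U := by
    rw [Finset.disjoint_left]
    intro x hx hxU
    have := hU x hxU
    have := Finset.mem_Ico.1 hx
    omega
  have hcard : U.card < n := by
    rw [← hn, Finset.card_union_of_disjoint hdisj, Nat.card_Ico]
    omega
  have hset : (Finset.Ico s e ∪ U).powerset.filter
      (fun S => S.Nonempty ∧ InRun S (Finset.Ico s e ∪ U)) =
      ((Finset.Ico s e).powerset.erase ∅) ∪
        U.powerset.filter (fun S => S.Nonempty ∧ InRun S U) := by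
    ext S
    simp only [Finset.mem_filter, Finset.mem_powerset, inRun_run_union_iff hU, Finset.mem_union,
      Finset.mem_erase, Finset.nonempty_iff_ne_empty]
    constructor
    · rintro ⟨_, h2, h3 | h3⟩
      · exact Or.inl ⟨h2, h3⟩
      · exact Or.inr ⟨h3.subset, h2, h3⟩
    · rintro (⟨h1, h2⟩ | ⟨h1, h2, h3⟩)
      · exact ⟨h2.trans Finset.subset_union_left, h1, Or.inl h2⟩
      · exact ⟨h1.trans Finset.subset_union_right, h2, Or.inr h3⟩
  have hdisj2 : Disjoint ((Finset.Ico s e).powerset.erase ∅)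
      (U.powerset.filter (fun S => S.Nonempty ∧ InRun S U)) := by
    rw [Finset.disjoint_left]
    intro S h1 h2
    obtain ⟨x, hx⟩ := (Finset.mem_filter.1 h2).2.1
    exact Finset.disjoint_left.1 hdisj
      (Finset.mem_powerset.1 (Finset.mem_of_mem_erase h1) hx)
      (Finset.mem_powerset.1 (Finset.mem_filter.1 h2).1 hx)
  rw [hset, Finset.sum_union hdisj2, convW, sum_sentenceCuts_run a hse hU,
    ← Finset.sum_erase_add _ _ (Finset.empty_mem_powerset (Finset.Ico s e))]
  congr 1
  · refine Finset.sum_congr rfl fun S hS => ?_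
    obtain ⟨hS1, hS2⟩ := Finset.mem_erase.1 hS
    rw [Finset.mem_powerset] at hS2
    simp only [hα.append_of_left_ne (subwordAt_ne_nil a (Finset.nonempty_iff_ne_empty.2 hS1)),
      mul_assoc]
    rw [List.sum_map_mul_left,
      sum_cuts_epsW_left _ fun t => F (sentenceAt a (Finset.Ico s e \ S) ++ t),
      sdiff_run_union hU hS2,
      sentenceAt_union a (run_add_one_lt hU Finset.sdiff_subset)]
  · have h1 := ih _ hcard (fun t => F (sentenceAt a (Finset.Ico s e) ++ t)) U rfl
    simp only [subwordAt_empty, List.nil_append, Finset.sdiff_empty]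
    rw [convW] at h1
    rw [h1]
    refine Finset.sum_congr rfl fun S hS => ?_
    have hSU := Finset.mem_powerset.1 (Finset.mem_filter.1 hS).1
    rw [Finset.union_sdiff_distrib,
      Finset.sdiff_eq_self_of_disjoint (hdisj.mono_right hSU), sentenceAt_union a]
    intro x hx y hy
    exact run_add_one_lt hU subset_rfl x hx y (Finset.sdiff_subset hy)

open Classical in
lemma succW_sentenceAt {α : Sentence A → ℂ} (hα : IsInfCharW α) (F : Sentence A → ℂ)
    (a : ℕ → A) {T : Finset ℕ} {m : ℕ} (hm : m ∈ T) (hmin : ∀ x ∈ T, m ≤ x) :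
    succW F α (sentenceAt a T) =
      ∑ S ∈ T.powerset.filter (fun S => m ∈ S ∧ InRun S S),
        α (subwordAt a S) * F (sentenceAt a (T \ S)) := by
  obtain ⟨s, e, U, hse, hU, rfl⟩ := exists_first_run ⟨m, hm⟩
  have hms : m = s := by
    apply le_antisymm
    · exact hmin s (by simp [hse])
    · rcases Finset.mem_union.1 hm with h | h
      · exact (Finset.mem_Ico.1 h).1
      · have := hU m h
        omega
  subst hms
  rw [succW, sum_sentenceCutsSucc_run a hse hU]
  have hset : (Finset.Ico m e ∪ U).powerset.filter (fun S => m ∈ S ∧ InRun S S) =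
      ((Finset.Ico m e).powerset.filter (m ∈ ·)).filter (fun S => InRun S S) := by
    ext S
    simp only [Finset.mem_filter, Finset.mem_powerset]
    constructor
    · rintro ⟨h1, h2, h3⟩
      refine ⟨⟨?_, h2⟩, h3⟩
      have h4 : InRun S (Finset.Ico m e ∪ U) :=
        fun x hx y hy z hxz hzy => h1 (h3 x hx y hy z hxz hzy)
      refine ((inRun_run_union_iff hU).1 h4).resolve_right fun h5 => ?_
      have := hU m (h5.subset h2)
      omega
    · rintro ⟨⟨h1, h2⟩, h3⟩
      exact ⟨h1.trans Finset.subset_union_left, h2, h3⟩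
  rw [hset, Finset.sum_filter (fun S => InRun S S)]
  refine Finset.sum_bij' (fun S _ => Finset.Ico m e \ S) (fun S _ => Finset.Ico m e \ S)
    ?_ ?_ ?_ ?_ ?_
  · intro S hS
    simp only [Finset.mem_filter, Finset.mem_powerset] at hS ⊢
    exact ⟨Finset.sdiff_subset, by simp [hS.2, hse]⟩
  · intro S hS
    simp only [Finset.mem_filter, Finset.mem_powerset] at hS ⊢
    exact ⟨Finset.sdiff_subset, by simp [hS.2]⟩
  · intro S hS
    simp only [Finset.mem_filter, Finset.mem_powerset] at hS
    exact Finset.sdiff_sdiff_eq_self hS.1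
  · intro S hS
    simp only [Finset.mem_filter, Finset.mem_powerset] at hS
    exact Finset.sdiff_sdiff_eq_self hS.1
  · intro S hS
    simp only [Finset.mem_filter, Finset.mem_powerset] at hS
    have hmem : m ∈ Finset.Ico m e \ S := by simp [hS.2, hse]
    simp only [hα.append_of_left_ne (sentenceAt_ne_nil a ⟨m, hmem⟩)]
    have h1 := sum_cuts_epsW_right (sentenceAt a U)
      fun t => F (subwordAt a S ++ t) * α (sentenceAt a (Finset.Ico m e \ S))
    simp only [mul_assoc] at h1
    rw [h1]
    split_ifs with hrun
    · obtain ⟨c, hc, hJ⟩ := eq_Ico_of_inRun_self hmem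
        (fun x hx => (Finset.mem_Ico.1 (Finset.sdiff_subset hx)).1) hrun
      have hce : c ≤ e := by
        have : c - 1 ∈ Finset.Ico m e \ S := by
          rw [hJ]
          exact Finset.mem_Ico.2 ⟨by omega, by omega⟩
        have := Finset.mem_Ico.1 (Finset.sdiff_subset this)
        omega
      have hSeq : S = Finset.Ico c e := by
        rw [← Finset.sdiff_sdiff_eq_self hS.1, hJ]
        ext x
        simp only [Finset.mem_sdiff, Finset.mem_Ico]
        omega
      rw [sdiff_run_union hU Finset.sdiff_subset, Finset.sdiff_sdiff_eq_self hS.1,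
        sentenceAt_union a (run_add_one_lt hU hS.1), hJ, sentenceAt_Ico, mul_comm]
      nth_rewrite 2 [hSeq]
      rw [sentenceAt_Ico, ← hSeq]
    · rw [infChar_sentenceAt_eq_zero hα a hrun, mul_zero]

end Zero

end Convolution

section NoncrossingRecursion

variable {n : ℕ}

/-- `P` is the set of blocks of a partition of `T`. -/
structure IsPartOf (T : Finset (Fin n)) (P : Finset (Finset (Fin n))) : Prop where
  nonempty : ∀ V ∈ P, V.Nonempty
  disjoint : ∀ V ∈ P, ∀ W ∈ P, ∀ x ∈ V, x ∈ W → V = W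
  cover : ∀ x, x ∈ T ↔ ∃ V ∈ P, x ∈ V

/-- The blocks in `P` are pairwise noncrossing. -/
def BlocksNoncrossing (P : Finset (Finset (Fin n))) : Prop :=
  ∀ a b c d : Fin n, a < b → b < c → c < d →
    ∀ V ∈ P, ∀ W ∈ P, a ∈ V → c ∈ V → b ∈ W → d ∈ W → V = W

/-- `P` is a noncrossing partition of `T`, every block lying in a single run of `T`. -/
structure IsNCPartOf (T : Finset (Fin n)) (P : Finset (Finset (Fin n))) : Prop
    extends IsPartOf T P where
  inRun : ∀ V ∈ P, InRun V T
  noncrossing : BlocksNoncrossing P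

/-- `P` is a partition of `T` into intervals. -/
structure IsIntPartOf (T : Finset (Fin n)) (P : Finset (Finset (Fin n))) : Prop
    extends IsPartOf T P where
  interval : ∀ V ∈ P, InRun V V

/-- `S` is an outer block of `P`: no element of `S` lies between two elements of another block. -/
def IsOuter (P : Finset (Finset (Fin n))) (S : Finset (Fin n)) : Prop :=
  ∀ V ∈ P, V ≠ S → InRun V Sᶜ

open Classical in
/-- The forest factorial of a set of blocks. -/
noncomputable def blocksFactorial (P : Finset (Finset (Fin n))) : ℕ :=
  ∏ V ∈ P, (P.filter fun W => NestedIn W V).card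

lemma isPartOf_insert_iff {T S : Finset (Fin n)} {P : Finset (Finset (Fin n))}
    (hS : S.Nonempty) (hSP : S ∉ P) :
    IsPartOf T (insert S P) ↔ S ⊆ T ∧ IsPartOf (T \ S) P := by
  classical
  constructor
  · intro h
    refine ⟨fun x hx => (h.cover x).2 ⟨S, by simp, hx⟩, fun V hV => h.nonempty V (by simp [hV]),
      fun V hV W hW => h.disjoint V (by simp [hV]) W (by simp [hW]), fun x => ?_⟩
    rw [Finset.mem_sdiff, h.cover]
    constructor
    · rintro ⟨⟨V, hV, hx⟩, hxS⟩
      rcases Finset.mem_insert.1 hV with rfl | hV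
      · exact absurd hx hxS
      · exact ⟨V, hV, hx⟩
    · rintro ⟨V, hV, hx⟩
      refine ⟨⟨V, by simp [hV], hx⟩, fun hxS => hSP ?_⟩
      rw [← h.disjoint V (by simp [hV]) S (by simp) x hx hxS]
      exact hV
  · rintro ⟨hST, h⟩
    have hd : ∀ V ∈ P, ∀ x ∈ V, x ∉ S := fun V hV x hx =>
      (Finset.mem_sdiff.1 ((h.cover x).2 ⟨V, hV, hx⟩)).2
    refine ⟨?_, ?_, fun x => ?_⟩
    · intro V hV
      rcases Finset.mem_insert.1 hV with rfl | hV
      · exact hS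
      · exact h.nonempty V hV
    · intro V hV W hW x hxV hxW
      rcases Finset.mem_insert.1 hV with rfl | hV' <;>
        rcases Finset.mem_insert.1 hW with rfl | hW'
      · rfl
      · exact absurd hxV (hd W hW' x hxW)
      · exact absurd hxW (hd V hV' x hxV)
      · exact h.disjoint V hV' W hW' x hxV hxW
    · constructor
      · intro hx
        by_cases hxS : x ∈ S
        · exact ⟨S, by simp, hxS⟩
        · obtain ⟨V, hV, hxV⟩ := (h.cover x).1 (Finset.mem_sdiff.2 ⟨hx, hxS⟩)
          exact ⟨V, by simp [hV], hxV⟩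
      · rintro ⟨V, hV, hxV⟩
        rcases Finset.mem_insert.1 hV with rfl | hV
        · exact hST hxV
        · exact (Finset.mem_sdiff.1 ((h.cover x).2 ⟨V, hV, hxV⟩)).1

lemma isNCPartOf_insert_iff {T S : Finset (Fin n)} {P : Finset (Finset (Fin n))}
    (hS : S.Nonempty) (hSP : S ∉ P) :
    (IsNCPartOf T (insert S P) ∧ IsOuter (insert S P) S) ↔
      InRun S T ∧ IsNCPartOf (T \ S) P := by
  classical
  constructor
  · rintro ⟨h, ho⟩
    obtain ⟨hST, hP⟩ := (isPartOf_insert_iff hS hSP).1 h.toIsPartOf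
    refine ⟨h.inRun S (by simp), hP, fun V hV x hx y hy z hxz hzy => ?_, ?_⟩
    · rw [Finset.mem_sdiff]
      refine ⟨h.inRun V (by simp [hV]) x hx y hy z hxz hzy, ?_⟩
      have hVS : V ≠ S := fun e => hSP (e ▸ hV)
      simpa using ho V (by simp [hV]) hVS x hx y hy z hxz hzy
    · intro a b c d hab hbc hcd V hV W hW
      exact h.noncrossing a b c d hab hbc hcd V (by simp [hV]) W (by simp [hW])
  · rintro ⟨hST, h⟩
    have ho : ∀ V ∈ P, InRun V Sᶜ := fun V hV x hx y hy z hxz hzy => by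
      have := h.inRun V hV x hx y hy z hxz hzy
      simp only [Finset.mem_compl]
      exact (Finset.mem_sdiff.1 this).2
    refine ⟨⟨(isPartOf_insert_iff hS hSP).2 ⟨hST.subset, h.toIsPartOf⟩, ?_, ?_⟩, ?_⟩
    · intro V hV
      rcases Finset.mem_insert.1 hV with rfl | hV
      · exact hST
      · exact fun x hx y hy z hxz hzy =>
          (Finset.mem_sdiff.1 (h.inRun V hV x hx y hy z hxz hzy)).1
    · intro a b c d hab hbc hcd V hV W hW ha hc hb hd
      rcases Finset.mem_insert.1 hV with rfl | hV' <;>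
        rcases Finset.mem_insert.1 hW with rfl | hW'
      · rfl
      · exact absurd hc (by simpa using ho W hW' b hb d hd c hbc.le hcd.le)
      · exact absurd hb (by simpa using ho V hV' a ha c hc b hab.le hbc.le)
      · exact h.noncrossing a b c d hab hbc hcd V hV' W hW' ha hc hb hd
    · intro V hV hVS
      exact ho V ((Finset.mem_insert.1 hV).resolve_left hVS)

/-- The block of the minimum is outer. -/
lemma IsNCPartOf.isOuter_of_min {T S : Finset (Fin n)} {P : Finset (Finset (Fin n))}
    (h : IsNCPartOf T P) (hS : S ∈ P) {m : Fin n} (hm : m ∈ S) (hmin : ∀ x ∈ T, m ≤ x) :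
    IsOuter P S := by
  intro V hV hVS x hx y hy z hxz hzy
  rw [Finset.mem_compl]
  intro hz
  have hne : ∀ u ∈ V, ∀ v ∈ S, u ≠ v := fun u hu v hv e =>
    hVS (h.disjoint V hV S hS u hu (e ▸ hv))
  have h1 : m < x := lt_of_le_of_ne (hmin x ((h.cover x).2 ⟨V, hV, hx⟩)) (hne x hx m hm).symm
  have h2 : x < z := lt_of_le_of_ne hxz (hne x hx z hz)
  have h3 : z < y := lt_of_le_of_ne hzy (hne y hy z hz).symm
  exact hVS (h.noncrossing m x z y h1 h2 h3 S hS V hV hm hz hx hy).symm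

lemma isNCPartOf_insert_min_iff {T S : Finset (Fin n)} {P : Finset (Finset (Fin n))}
    {m : Fin n} (hm : m ∈ S) (hmin : ∀ x ∈ T, m ≤ x) (hSP : S ∉ P) :
    IsNCPartOf T (insert S P) ↔ InRun S T ∧ IsNCPartOf (T \ S) P := by
  rw [← isNCPartOf_insert_iff ⟨m, hm⟩ hSP]
  exact ⟨fun h => ⟨h, h.isOuter_of_min (by simp) hm hmin⟩, fun h => h.1⟩

lemma isIntPartOf_insert_iff {T S : Finset (Fin n)} {P : Finset (Finset (Fin n))}
    (hS : S.Nonempty) (hSP : S ∉ P) :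
    IsIntPartOf T (insert S P) ↔ (S ⊆ T ∧ InRun S S) ∧ IsIntPartOf (T \ S) P := by
  constructor
  · intro h
    obtain ⟨hST, hP⟩ := (isPartOf_insert_iff hS hSP).1 h.toIsPartOf
    exact ⟨⟨hST, h.interval S (by simp)⟩, hP, fun V hV => h.interval V (by simp [hV])⟩
  · rintro ⟨⟨hST, hSS⟩, h⟩
    refine ⟨(isPartOf_insert_iff hS hSP).2 ⟨hST, h.toIsPartOf⟩, fun V hV => ?_⟩
    rcases Finset.mem_insert.1 hV with rfl | hV
    · exact hSS
    · exact h.interval V hV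

lemma IsPartOf.notMem_of_sdiff {T S : Finset (Fin n)} {P : Finset (Finset (Fin n))}
    (h : IsPartOf (T \ S) P) (hS : S.Nonempty) : S ∉ P := by
  intro hSP
  obtain ⟨x, hx⟩ := hS
  exact (Finset.mem_sdiff.1 ((h.cover x).2 ⟨S, hSP, hx⟩)).2 hx

open Classical in
/-- Summing over partitions of `T` by removing the block of the minimum. -/
lemma sum_remove_min_block {T : Finset (Fin n)} {m : Fin n} (hmT : m ∈ T)
    (Q : Finset (Fin n) → Finset (Finset (Fin n)) → Prop)
    (hQ : ∀ T P, Q T P → IsPartOf T P) (R : Finset (Fin n) → Prop)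
    (hins : ∀ S P, m ∈ S → S ∉ P → (Q T (insert S P) ↔ R S ∧ Q (T \ S) P))
    (w : Finset (Fin n) → ℂ) (k : ℕ) :
    ∑ P ∈ Finset.univ.filter (fun P => Q T P ∧ P.card = k + 1), ∏ V ∈ P, w V =
      ∑ S ∈ T.powerset.filter (fun S => m ∈ S ∧ R S), w S *
        ∑ P ∈ Finset.univ.filter (fun P => Q (T \ S) P ∧ P.card = k), ∏ V ∈ P, w V := by
  simp only [Finset.mul_sum]
  rw [Finset.sum_sigma']
  symm
  refine Finset.sum_bij (fun x _ => insert x.1 x.2) ?_ ?_ ?_ ?_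
  · rintro ⟨S, P⟩ hx
    simp only [Finset.mem_sigma, Finset.mem_filter, Finset.mem_univ, true_and,
      Finset.mem_powerset] at hx ⊢
    obtain ⟨⟨_, hmS, hR⟩, hP, hk⟩ := hx
    have hSP := (hQ _ _ hP).notMem_of_sdiff ⟨m, hmS⟩
    exact ⟨(hins S P hmS hSP).2 ⟨hR, hP⟩, by rw [Finset.card_insert_of_notMem hSP, hk]⟩
  · rintro ⟨S, P⟩ hx ⟨S', P'⟩ hx' heq
    simp only [Finset.mem_sigma, Finset.mem_filter, Finset.mem_univ, true_and,
      Finset.mem_powerset] at hx hx' heq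
    obtain ⟨⟨_, hmS, hR⟩, hP, hk⟩ := hx
    obtain ⟨⟨_, hmS', hR'⟩, hP', hk'⟩ := hx'
    have hSP := (hQ _ _ hP).notMem_of_sdiff ⟨m, hmS⟩
    have hSP' := (hQ _ _ hP').notMem_of_sdiff ⟨m, hmS'⟩
    have h1 := hQ _ _ ((hins S P hmS hSP).2 ⟨hR, hP⟩)
    have hS : S = S' := h1.disjoint S (by simp) S' (by simp [heq]) m hmS hmS'
    subst hS
    have hPP : P = P' := by
      rw [← Finset.erase_insert hSP, heq, Finset.erase_insert hSP']
    rw [hPP]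
  · intro P hP
    simp only [Finset.mem_filter, Finset.mem_univ, true_and] at hP
    obtain ⟨S, hS, hmS⟩ := ((hQ _ _ hP.1).cover m).1 hmT
    have h1 := (hins S (P.erase S) hmS (Finset.notMem_erase S P)).1
      (by rw [Finset.insert_erase hS]; exact hP.1)
    refine ⟨⟨S, P.erase S⟩, ?_, Finset.insert_erase hS⟩
    simp only [Finset.mem_sigma, Finset.mem_filter, Finset.mem_univ, true_and,
      Finset.mem_powerset]
    refine ⟨⟨fun x hx => ((hQ _ _ hP.1).cover x).2 ⟨S, hS, hx⟩, hmS, h1.1⟩, h1.2, ?_⟩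
    rw [Finset.card_erase_of_mem hS, hP.2]
    rfl
  · rintro ⟨S, P⟩ hx
    simp only [Finset.mem_sigma, Finset.mem_filter, Finset.mem_univ, true_and,
      Finset.mem_powerset] at hx
    rw [Finset.prod_insert ((hQ _ _ hx.2.1).notMem_of_sdiff ⟨m, hx.1.2.1⟩)]

open Classical in
/-- Summing over noncrossing partitions of `T` with a marked outer block. -/
lemma sum_remove_outer_block (T : Finset (Fin n)) (c : Finset (Finset (Fin n)) → ℂ)
    (w : Finset (Fin n) → ℂ) (k : ℕ) :
    ∑ P ∈ Finset.univ.filter (fun P => IsNCPartOf T P ∧ P.card = k + 1),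
        ∑ S ∈ P.filter (IsOuter P), c (P.erase S) * ∏ V ∈ P, w V =
      ∑ S ∈ T.powerset.filter (fun S => S.Nonempty ∧ InRun S T), w S *
        ∑ P ∈ Finset.univ.filter (fun P => IsNCPartOf (T \ S) P ∧ P.card = k),
          c P * ∏ V ∈ P, w V := by
  simp only [Finset.mul_sum]
  rw [Finset.sum_sigma', Finset.sum_sigma']
  symm
  refine Finset.sum_bij (fun x _ => ⟨insert x.1 x.2, x.1⟩) ?_ ?_ ?_ ?_
  · rintro ⟨S, P⟩ hx
    simp only [Finset.mem_sigma, Finset.mem_filter, Finset.mem_univ, true_and,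
      Finset.mem_powerset] at hx ⊢
    obtain ⟨⟨_, hS, hR⟩, hP, hk⟩ := hx
    have hSP := hP.notMem_of_sdiff hS
    obtain ⟨h1, h2⟩ := (isNCPartOf_insert_iff hS hSP).2 ⟨hR, hP⟩
    exact ⟨⟨h1, by rw [Finset.card_insert_of_notMem hSP, hk]⟩, by simp, h2⟩
  · rintro ⟨S, P⟩ hx ⟨S', P'⟩ hx' heq
    simp only [Finset.mem_sigma, Finset.mem_filter, Finset.mem_univ, true_and,
      Finset.mem_powerset] at hx hx'
    simp only [Sigma.mk.injEq, heq_eq_eq] at heq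
    obtain ⟨heq, rfl⟩ := heq
    rw [← Finset.erase_insert (hx.2.1.notMem_of_sdiff hx.1.2.1), heq,
      Finset.erase_insert (hx'.2.1.notMem_of_sdiff hx'.1.2.1)]
  · rintro ⟨P, S⟩ hP
    simp only [Finset.mem_sigma, Finset.mem_filter, Finset.mem_univ, true_and] at hP
    obtain ⟨⟨hP, hk⟩, hS, ho⟩ := hP
    have hne := hP.nonempty S hS
    have h1 := (isNCPartOf_insert_iff (T := T) hne (Finset.notMem_erase S P)).1
      (by rw [Finset.insert_erase hS]; exact ⟨hP, ho⟩)
    refine ⟨⟨S, P.erase S⟩, ?_, by simp [Finset.insert_erase hS]⟩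
    simp only [Finset.mem_sigma, Finset.mem_filter, Finset.mem_univ, true_and,
      Finset.mem_powerset]
    refine ⟨⟨h1.1.subset, hne, h1.1⟩, h1.2, ?_⟩
    rw [Finset.card_erase_of_mem hS, hk]
    rfl
  · rintro ⟨S, P⟩ hx
    simp only [Finset.mem_sigma, Finset.mem_filter, Finset.mem_univ, true_and,
      Finset.mem_powerset] at hx
    have hSP := hx.2.1.notMem_of_sdiff hx.1.2.1
    simp only [Finset.prod_insert hSP, Finset.erase_insert hSP]
    ring

section Hook

variable {T : Finset (Fin n)} {P : Finset (Finset (Fin n))}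

lemma nestedIn_refl (V : Finset (Fin n)) : NestedIn V V :=
  fun w hw => ⟨⟨w, hw, le_rfl⟩, ⟨w, hw, le_rfl⟩⟩

lemma nestedIn_trans {U V W : Finset (Fin n)} (h₁ : NestedIn U V) (h₂ : NestedIn V W) :
    NestedIn U W := by
  intro u hu
  obtain ⟨⟨a, ha, hau⟩, b, hb, hub⟩ := h₁ u hu
  obtain ⟨⟨a', ha', haa⟩, _⟩ := h₂ a ha
  obtain ⟨_, b', hb', hbb⟩ := h₂ b hb
  exact ⟨⟨a', ha', haa.trans hau⟩, ⟨b', hb', hub.trans hbb⟩⟩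

/-- A block meeting the hull of another block is nested in it. -/
lemma IsNCPartOf.nestedIn_of_between (h : IsNCPartOf T P) {V W : Finset (Fin n)} (hV : V ∈ P)
    (hW : W ∈ P) (hVW : V ≠ W) {x y z : Fin n} (hx : x ∈ V) (hy : y ∈ V) (hz : z ∈ W)
    (hxz : x ≤ z) (hzy : z ≤ y) : NestedIn W V := by
  have hne : ∀ u ∈ V, ∀ v ∈ W, u ≠ v := fun u hu v hv e =>
    hVW (h.disjoint V hV W hW u hu (e ▸ hv))
  have h1 : x < z := lt_of_le_of_ne hxz (hne x hx z hz)
  have h2 : z < y := lt_of_le_of_ne hzy (hne y hy z hz).symm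
  intro u hu
  refine ⟨⟨x, hx, ?_⟩, ⟨y, hy, ?_⟩⟩ <;> by_contra hlt <;> rw [not_le] at hlt
  · exact hVW (h.noncrossing u x z y hlt h1 h2 W hW V hV hu hz hx hy).symm
  · exact hVW (h.noncrossing x z y u h1 h2 hlt V hV W hW hx hy hz hu)

lemma IsOuter.not_nestedIn {S V : Finset (Fin n)} (h : IsOuter P S) (hV : V ∈ P) (hVS : V ≠ S)
    (hS : S.Nonempty) : ¬ NestedIn S V := by
  intro hn
  obtain ⟨z, hz⟩ := hS
  obtain ⟨⟨x, hx, hxz⟩, y, hy, hzy⟩ := hn z hz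
  exact Finset.mem_compl.1 (h V hV hVS x hx y hy z hxz hzy) hz

open Classical in
lemma IsNCPartOf.existsUnique_outer (h : IsNCPartOf T P) {W : Finset (Fin n)} (hW : W ∈ P) :
    (P.filter fun S => IsOuter P S ∧ NestedIn W S).card = 1 := by
  rw [Finset.card_eq_one]
  obtain ⟨S, hS, hmin⟩ := Finset.exists_min_image (P.filter (NestedIn W ·))
    (fun S => S.min) ⟨W, by simp [hW, nestedIn_refl]⟩
  obtain ⟨hSP, hWS⟩ := Finset.mem_filter.1 hS
  have hout : IsOuter P S := by
    intro V hV hVS x hx y hy z hxz hzy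
    rw [Finset.mem_compl]
    intro hz
    have hSV := h.nestedIn_of_between hV hSP hVS hx hy hz hxz hzy
    have h1 := hmin V (Finset.mem_filter.2 ⟨hV, nestedIn_trans hWS hSV⟩)
    obtain ⟨s, hs⟩ := Finset.min_of_nonempty (h.nonempty S hSP)
    have hsS := Finset.mem_of_min hs
    obtain ⟨v, hv⟩ := Finset.min_of_nonempty (h.nonempty V hV)
    have hvV := Finset.mem_of_min hv
    obtain ⟨⟨u, hu, hus⟩, _⟩ := hSV s hsS
    rw [hs, hv, WithTop.coe_le_coe] at h1
    have h2 : v ≤ u := Finset.min_le_of_eq hu hv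
    have h3 : s = u := le_antisymm (h1.trans h2) hus
    exact hVS (h.disjoint V hV S hSP u hu (h3 ▸ hsS))
  refine ⟨S, Finset.eq_singleton_iff_unique_mem.2 ⟨by simp [hSP, hout, hWS], ?_⟩⟩
  intro S' hS'
  obtain ⟨hS'P, hout', hWS'⟩ := Finset.mem_filter.1 hS'
  by_contra hne
  obtain ⟨u, hu⟩ := h.nonempty W hW
  obtain ⟨⟨a, ha, hau⟩, b, hb, hub⟩ := hWS u hu
  obtain ⟨⟨a', ha', hau'⟩, b', hb', hub'⟩ := hWS' u hu
  rcases le_total a a' with hle | hle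
  · exact Finset.mem_compl.1 (hout' S hSP (Ne.symm hne) a ha b hb a' hle (hau'.trans hub)) ha'
  · exact Finset.mem_compl.1 (hout S' hS'P hne a' ha' b' hb' a hle (hau.trans hub')) ha

open Classical in
lemma IsNCPartOf.sum_card_nested (h : IsNCPartOf T P) :
    ∑ S ∈ P.filter (IsOuter P), (P.filter fun W => NestedIn W S).card = P.card := by
  simp only [Finset.card_filter _ P]
  rw [Finset.sum_comm, Finset.card_eq_sum_ones]
  refine Finset.sum_congr rfl fun W hW => ?_
  rw [← Finset.card_filter, Finset.filter_filter, h.existsUnique_outer hW]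

open Classical in
lemma IsNCPartOf.blocksFactorial_eq (h : IsNCPartOf T P) {S : Finset (Fin n)} (hS : S ∈ P)
    (ho : IsOuter P S) :
    blocksFactorial P =
      (P.filter fun W => NestedIn W S).card * blocksFactorial (P.erase S) := by
  rw [blocksFactorial, ← Finset.mul_prod_erase P _ hS, blocksFactorial]
  congr 1
  refine Finset.prod_congr rfl fun V hV => ?_
  obtain ⟨hVS, hVP⟩ := Finset.mem_erase.1 hV
  congr 1
  ext W
  simp only [Finset.mem_filter, Finset.mem_erase]
  constructor
  · rintro ⟨h1, h2⟩
    refine ⟨⟨?_, h1⟩, h2⟩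
    rintro rfl
    exact ho.not_nestedIn hVP hVS (h.nonempty W hS) h2
  · rintro ⟨⟨_, h1⟩, h2⟩
    exact ⟨h1, h2⟩

open Classical in
/-- The recursion for inverse forest factorials by removal of an outer block. -/
lemma IsNCPartOf.card_mul_inv_blocksFactorial (h : IsNCPartOf T P) :
    (P.card : ℂ) * (blocksFactorial P : ℂ)⁻¹ =
      ∑ S ∈ P.filter (IsOuter P), (blocksFactorial (P.erase S) : ℂ)⁻¹ := by
  rw [← h.sum_card_nested, Nat.cast_sum, Finset.sum_mul]
  refine Finset.sum_congr rfl fun S hS => ?_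
  obtain ⟨hSP, ho⟩ := Finset.mem_filter.1 hS
  have hpos : ((P.filter fun W => NestedIn W S).card : ℂ) ≠ 0 := by
    rw [Nat.cast_ne_zero, Finset.card_ne_zero]
    exact ⟨S, Finset.mem_filter.2 ⟨hSP, nestedIn_refl S⟩⟩
  rw [h.blocksFactorial_eq hSP ho, Nat.cast_mul, mul_inv, ← mul_assoc, mul_inv_cancel₀ hpos,
    one_mul]

end Hook

end NoncrossingRecursion

section Values

variable {A : Type*} {n : ℕ}

lemma coe_mem_map_val {S : Finset (Fin n)} {x : Fin n} :
    (x : ℕ) ∈ S.map Fin.valEmbedding ↔ x ∈ S :=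
  Finset.mem_map' Fin.valEmbedding

lemma inRun_map_iff {S T : Finset (Fin n)} :
    InRun (S.map Fin.valEmbedding) (T.map Fin.valEmbedding) ↔ InRun S T := by
  constructor
  · intro h x hx y hy z hxz hzy
    exact coe_mem_map_val.1
      (h x (coe_mem_map_val.2 hx) y (coe_mem_map_val.2 hy) z hxz hzy)
  · intro h x hx y hy z hxz hzy
    obtain ⟨x, hxS, rfl⟩ := Finset.mem_map.1 hx
    obtain ⟨y, hyS, rfl⟩ := Finset.mem_map.1 hy
    simp only [Fin.valEmbedding_apply] at hxz hzy
    exact Finset.mem_map.2 ⟨⟨z, hzy.trans_lt y.2⟩, h x hxS y hyS _ hxz hzy, rfl⟩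

lemma sum_subsets_map (α F : Sentence A → ℂ) (a : ℕ → A) (T : Finset (Fin n))
    (p : Finset (Fin n) → Prop) [DecidablePred p] (q : Finset ℕ → Prop) [DecidablePred q]
    (hpq : ∀ S, q (S.map Fin.valEmbedding) ↔ p S) :
    ∑ S ∈ (T.map Fin.valEmbedding).powerset.filter q,
        α (subwordAt a S) * F (sentenceAt a (T.map Fin.valEmbedding \ S)) =
      ∑ S ∈ T.powerset.filter p, α (subwordAt a (S.map Fin.valEmbedding)) *
        F (sentenceAt a ((T \ S).map Fin.valEmbedding)) := by
  rw [Finset.sum_filter, sum_powerset_map, Finset.sum_filter]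
  refine Finset.sum_congr rfl fun S _ => ?_
  rw [Finset.map_sdiff]
  by_cases h : p S
  · rw [if_pos h, if_pos ((hpq S).2 h)]
  · rw [if_neg h, if_neg fun h' => h ((hpq S).1 h')]

lemma epsW_sentenceAt (a : ℕ → A) (T : Finset ℕ) :
    epsW (sentenceAt a T) = if T = ∅ then 1 else 0 := by
  split_ifs with h
  · rw [h, sentenceAt_empty, epsW_nil]
  · exact epsW_of_ne_nil (sentenceAt_ne_nil a (Finset.nonempty_iff_ne_empty.2 h))

lemma isPartOf_empty_iff {T : Finset (Fin n)} : IsPartOf T ∅ ↔ T = ∅ := by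
  constructor
  · intro h
    ext x
    rw [h.cover]
    simp
  · rintro rfl
    exact ⟨by simp, by simp, by simp⟩

lemma isNCPartOf_empty_iff {T : Finset (Fin n)} : IsNCPartOf T ∅ ↔ T = ∅ :=
  ⟨fun h => isPartOf_empty_iff.1 h.toIsPartOf,
    fun h => ⟨isPartOf_empty_iff.2 h, by simp, by simp [BlocksNoncrossing]⟩⟩

lemma isIntPartOf_empty_iff {T : Finset (Fin n)} : IsIntPartOf T ∅ ↔ T = ∅ :=
  ⟨fun h => isPartOf_empty_iff.1 h.toIsPartOf, fun h => ⟨isPartOf_empty_iff.2 h, by simp⟩⟩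

lemma IsPartOf.eq_empty {P : Finset (Finset (Fin n))} (h : IsPartOf ∅ P) : P = ∅ := by
  rw [Finset.eq_empty_iff_forall_notMem]
  intro V hV
  obtain ⟨x, hx⟩ := h.nonempty V hV
  simpa using (h.cover x).2 ⟨V, hV, hx⟩

open Classical in
lemma sum_card_zero (T : Finset (Fin n)) (Q : Finset (Finset (Fin n)) → Prop)
    (hQ : Q ∅ ↔ T = ∅) (f : Finset (Finset (Fin n)) → ℂ) :
    ∑ P ∈ Finset.univ.filter (fun P => Q P ∧ P.card = 0), f P = if T = ∅ then f ∅ else 0 := by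
  have : (Finset.univ.filter fun P => Q P ∧ P.card = 0) = if T = ∅ then {∅} else ∅ := by
    ext P
    rw [Finset.mem_filter, Finset.card_eq_zero]
    split_ifs with h
    · rw [Finset.mem_singleton]
      exact ⟨fun h' => h'.2.2, fun h' => ⟨Finset.mem_univ _, h' ▸ hQ.2 h, h'⟩⟩
    · simp only [Finset.notMem_empty, iff_false]
      rintro ⟨_, h1, h2⟩
      exact h (hQ.1 (h2 ▸ h1))
  rw [this]
  split_ifs <;> simp

open Classical in
lemma finsum_card_fiber (Q : Finset (Finset (Fin n)) → Prop) (f : Finset (Finset (Fin n)) → ℂ) :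
    ∑ᶠ k : ℕ, ∑ P ∈ Finset.univ.filter (fun P => Q P ∧ P.card = k), f P =
      ∑ P ∈ Finset.univ.filter Q, f P := by
  have hmaps : ∀ P ∈ Finset.univ.filter Q,
      P.card ∈ Finset.range (Fintype.card (Finset (Fin n)) + 1) := fun P _ => by
    rw [Finset.mem_range, Nat.lt_succ_iff]
    exact Finset.card_le_univ P
  rw [← Finset.sum_fiberwise_of_maps_to hmaps f, finsum_eq_sum_of_support_subset
    (s := Finset.range (Fintype.card (Finset (Fin n)) + 1))]
  · simp only [Finset.filter_filter]
  · intro k hk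
    rw [Function.mem_support] at hk
    obtain ⟨P, hP, _⟩ := Finset.exists_ne_zero_of_sum_ne_zero hk
    obtain ⟨h1, h2, h3⟩ := Finset.mem_filter.1 hP
    have := hmaps P (Finset.mem_filter.2 ⟨h1, h2⟩)
    rw [h3] at this
    exact this

/-- The product over the blocks of `P` of `α` applied to the corresponding subwords. -/
noncomputable def blocksApply (α : Sentence A → ℂ) (a : ℕ → A) (P : Finset (Finset (Fin n))) :
    ℂ :=
  ∏ V ∈ P, α (subwordAt a (V.map Fin.valEmbedding))

section Powers

variable [Zero A] {α : Sentence A → ℂ}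

open Classical in
lemma precPowW_sentenceAt (hα : IsInfCharW α) (a : ℕ → A) (k : ℕ) (T : Finset (Fin n)) :
    precPowW α k (sentenceAt a (T.map Fin.valEmbedding)) =
      ∑ P ∈ Finset.univ.filter (fun P => IsNCPartOf T P ∧ P.card = k), blocksApply α a P := by
  induction k generalizing T with
  | zero =>
    rw [sum_card_zero T (IsNCPartOf T) isNCPartOf_empty_iff, precPowW, epsW_sentenceAt]
    simp [blocksApply]
  | succ k ih =>
    rcases T.eq_empty_or_nonempty with rfl | hT
    · rw [Finset.map_empty, sentenceAt_empty, Finset.sum_eq_zero]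
      · simp [precPowW, precW, sentenceCutsPrec]
      · intro P hP
        obtain ⟨_, h1, h2⟩ := Finset.mem_filter.1 hP
        simp [h1.eq_empty] at h2
    · have hmin : ∀ x ∈ T, T.min' hT ≤ x := fun x hx => T.min'_le x hx
      rw [precPowW, precW_sentenceAt hα _ a (m := (T.min' hT : ℕ))
        (coe_mem_map_val.2 (T.min'_mem hT))
        (fun x hx => by
          obtain ⟨y, hy, rfl⟩ := Finset.mem_map.1 hx
          exact hmin y hy),
        sum_subsets_map α _ a T (fun S => T.min' hT ∈ S ∧ InRun S T) _
          (fun S => by rw [inRun_map_iff, coe_mem_map_val])]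
      simp only [ih, blocksApply]
      exact (sum_remove_min_block (T.min'_mem hT) IsNCPartOf (fun T P h => h.toIsPartOf)
        (fun S => InRun S T) (fun S P hm hSP => isNCPartOf_insert_min_iff hm hmin hSP)
        (fun V => α (subwordAt a (V.map Fin.valEmbedding))) k).symm

open Classical in
lemma succPowW_sentenceAt (hα : IsInfCharW α) (a : ℕ → A) (k : ℕ) (T : Finset (Fin n)) :
    succPowW α k (sentenceAt a (T.map Fin.valEmbedding)) =
      ∑ P ∈ Finset.univ.filter (fun P => IsIntPartOf T P ∧ P.card = k), blocksApply α a P := by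
  induction k generalizing T with
  | zero =>
    rw [sum_card_zero T (IsIntPartOf T) isIntPartOf_empty_iff, succPowW, epsW_sentenceAt]
    simp [blocksApply]
  | succ k ih =>
    rcases T.eq_empty_or_nonempty with rfl | hT
    · rw [Finset.map_empty, sentenceAt_empty, Finset.sum_eq_zero]
      · simp [succPowW, succW, sentenceCutsSucc]
      · intro P hP
        obtain ⟨_, h1, h2⟩ := Finset.mem_filter.1 hP
        simp [h1.eq_empty] at h2
    · have hmin : ∀ x ∈ T, T.min' hT ≤ x := fun x hx => T.min'_le x hx
      rw [succPowW, succW_sentenceAt hα _ a (m := (T.min' hT : ℕ))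
        (coe_mem_map_val.2 (T.min'_mem hT))
        (fun x hx => by
          obtain ⟨y, hy, rfl⟩ := Finset.mem_map.1 hx
          exact hmin y hy),
        sum_subsets_map α _ a T (fun S => T.min' hT ∈ S ∧ InRun S S) _
          (fun S => by rw [inRun_map_iff, coe_mem_map_val])]
      simp only [ih, blocksApply]
      refine Eq.trans (Finset.sum_congr ?_ fun _ _ => rfl)
        (sum_remove_min_block (T.min'_mem hT) IsIntPartOf (fun T P h => h.toIsPartOf)
        (fun S => S ⊆ T ∧ InRun S S) (fun S P hm hSP => isIntPartOf_insert_iff ⟨_, hm⟩ hSP)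
        (fun V => α (subwordAt a (V.map Fin.valEmbedding))) k).symm
      ext S
      simp only [Finset.mem_filter, Finset.mem_powerset]
      tauto

open Classical in
lemma convPowW_sentenceAt (hα : IsInfCharW α) (a : ℕ → A) (k : ℕ) (T : Finset (Fin n)) :
    (k.factorial : ℂ)⁻¹ * convPowW α k (sentenceAt a (T.map Fin.valEmbedding)) =
      ∑ P ∈ Finset.univ.filter (fun P => IsNCPartOf T P ∧ P.card = k),
        (blocksFactorial P : ℂ)⁻¹ * blocksApply α a P := by
  induction k generalizing T with
  | zero =>
    rw [sum_card_zero T (IsNCPartOf T) isNCPartOf_empty_iff, convPowW, epsW_sentenceAt]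
    simp [blocksApply, blocksFactorial]
  | succ k ih =>
    have hk : ((k : ℂ) + 1) ≠ 0 := Nat.cast_add_one_ne_zero k
    apply mul_left_cancel₀ hk
    have h1 := sum_remove_outer_block T (fun P => (blocksFactorial P : ℂ)⁻¹)
      (fun V => α (subwordAt a (V.map Fin.valEmbedding))) k
    have h2 : ((k : ℂ) + 1) * ∑ P ∈ Finset.univ.filter
          (fun P => IsNCPartOf T P ∧ P.card = k + 1),
          (blocksFactorial P : ℂ)⁻¹ * blocksApply α a P =
        ∑ P ∈ Finset.univ.filter (fun P => IsNCPartOf T P ∧ P.card = k + 1),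
          ∑ S ∈ P.filter (IsOuter P), (blocksFactorial (P.erase S) : ℂ)⁻¹ *
            ∏ V ∈ P, α (subwordAt a (V.map Fin.valEmbedding)) := by
      rw [Finset.mul_sum]
      refine Finset.sum_congr rfl fun P hP => ?_
      obtain ⟨_, hP, hc⟩ := Finset.mem_filter.1 hP
      have h3 := hP.card_mul_inv_blocksFactorial
      rw [← Finset.sum_mul, ← h3, hc, blocksApply]
      push_cast
      ring
    rw [h2, h1, convPowW, convW_sentenceAt hα,
      sum_subsets_map α _ a T (fun S => S.Nonempty ∧ InRun S T) _
        (fun S => by rw [inRun_map_iff, Finset.map_nonempty]), Finset.mul_sum, Finset.mul_sum]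
    refine Finset.sum_congr rfl fun S _ => ?_
    have h4 := ih (T \ S)
    simp only [blocksApply] at h4
    rw [← h4, Nat.factorial_succ]
    push_cast
    have hf : (k.factorial : ℂ) ≠ 0 := Nat.cast_ne_zero.2 k.factorial_ne_zero
    field_simp

end Powers

lemma isPartOf_parts (π : NPart n) : IsPartOf Finset.univ π.parts where
  nonempty V hV := π.nonempty_of_mem_parts hV
  disjoint V hV W hW x hxV hxW := π.eq_of_mem_parts hV hW hxV hxW
  cover x := by
    simp only [Finset.mem_univ, true_iff]
    exact π.exists_mem (Finset.mem_univ x)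

lemma exists_parts_eq {P : Finset (Finset (Fin n))} (h : IsPartOf Finset.univ P) :
    ∃ π : NPart n, π.parts = P := by
  classical
  refine ⟨⟨P, ?_, ?_, ?_⟩, rfl⟩
  · rw [Finset.supIndep_iff_pairwiseDisjoint]
    intro V hV W hW hne
    exact Finset.disjoint_left.2 fun x hx hx' => hne (h.disjoint V hV W hW x hx hx')
  · ext x
    rw [Finset.mem_sup]
    exact (h.cover x).symm
  · intro h0
    exact absurd (h.nonempty _ h0) (by simp)

open Classical in
lemma finsum_mem_parts (R : NPart n → Prop) (Q : Finset (Finset (Fin n)) → Prop)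
    (hR : ∀ π, R π ↔ Q π.parts) (hQ : ∀ P, Q P → IsPartOf Finset.univ P)
    (f : Finset (Finset (Fin n)) → ℂ) :
    ∑ᶠ π ∈ {π : NPart n | R π}, f π.parts = ∑ P ∈ Finset.univ.filter Q, f P := by
  rw [finsum_mem_eq_finite_toFinset_sum _ (Set.toFinite _)]
  refine Finset.sum_bij (fun π _ => π.parts) ?_ ?_ ?_ ?_
  · intro π hπ
    simp only [Set.Finite.mem_toFinset, Set.mem_ofPred_eq] at hπ
    exact Finset.mem_filter.2 ⟨Finset.mem_univ _, (hR π).1 hπ⟩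
  · intro π _ π' _ h
    exact Finpartition.ext h
  · intro P hP
    obtain ⟨_, hP⟩ := Finset.mem_filter.1 hP
    obtain ⟨π, rfl⟩ := exists_parts_eq (hQ P hP)
    exact ⟨π, by simpa [hR] using hP, rfl⟩
  · intro π _
    rfl

lemma isNoncrossing_iff (π : NPart n) :
    IsNoncrossing π ↔ IsNCPartOf Finset.univ π.parts :=
  ⟨fun h => ⟨isPartOf_parts π, fun _ _ _ _ _ _ _ _ _ => Finset.mem_univ _, h⟩,
    fun h => h.noncrossing⟩

lemma isIntervalPart_iff (π : NPart n) :
    IsIntervalPart π ↔ IsIntPartOf Finset.univ π.parts :=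
  ⟨fun h => ⟨isPartOf_parts π, h⟩, fun h => h.interval⟩

lemma map_valEmbedding_univ_eq (n : ℕ) :
    (Finset.univ : Finset (Fin n)).map Fin.valEmbedding = Finset.Ico 0 (0 + n) := by
  ext x
  simp

/-- The functional on words (and the empty list) induced by a functional on sentences. -/
noncomputable def onList (α : Sentence A → ℂ) (l : List A) : ℂ := α (mkWords [l])

lemma onList_word (α : Sentence A → ℂ) (w : WordNE A) : onList α w.1 = α [w] := by
  rw [onList, mkWords_singleton _ w.2]
  rfl

section Exponentials

variable [Zero A] {α : Sentence A → ℂ}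

lemma blockApply_onList (α : Sentence A → ℂ) (w : WordNE A) (π : NPart w.1.length) :
    blockApply (onList α) w.1.get π = blocksApply α (fun i => w.1.getD i 0) π.parts := by
  refine Finset.prod_congr rfl fun V _ => ?_
  have hsort : (V.map Fin.valEmbedding).sort (· ≤ ·) = (V.sort (· ≤ ·)).map Fin.val :=
    (Finset.map_sort Fin.valEmbedding V (· ≤ ·) (· ≤ ·) fun x _ y _ => Iff.rfl).symm
  rw [onList, subwordAt, hsort, List.map_map]
  congr 3
  refine List.map_congr_left fun i _ => ?_
  simp

lemma sentenceAt_univ (w : WordNE A) :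
    sentenceAt (fun i => w.1.getD i 0)
      ((Finset.univ : Finset (Fin w.1.length)).map Fin.valEmbedding) = [w] := by
  rw [map_valEmbedding_univ_eq, sentenceAt_word]

/-- `E_≺(α)` on words is a sum over noncrossing partitions. -/
lemma ePrecW_word (hα : IsInfCharW α) (w : WordNE A) :
    ePrecW α [w] = ∑ᶠ π ∈ {π : NPart w.1.length | IsNoncrossing π},
      blockApply (onList α) w.1.get π := by
  classical
  simp only [blockApply_onList, ePrecW]
  rw [finsum_mem_parts _ _ isNoncrossing_iff (fun P h => h.toIsPartOf)
    (blocksApply α fun i => w.1.getD i 0), ← finsum_card_fiber]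
  simp only [← precPowW_sentenceAt hα, sentenceAt_univ]

/-- `E_≻(α)` on words is a sum over interval partitions. -/
lemma eSuccW_word (hα : IsInfCharW α) (w : WordNE A) :
    eSuccW α [w] = ∑ᶠ π ∈ {π : NPart w.1.length | IsIntervalPart π},
      blockApply (onList α) w.1.get π := by
  classical
  simp only [blockApply_onList, eSuccW]
  rw [finsum_mem_parts _ _ isIntervalPart_iff (fun P h => h.toIsPartOf)
    (blocksApply α fun i => w.1.getD i 0), ← finsum_card_fiber]
  simp only [← succPowW_sentenceAt hα, sentenceAt_univ]

/-- `exp^*(α)` on words is a sum over noncrossing partitions weighted by inverse forest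
factorials. -/
lemma expStarW_word (hα : IsInfCharW α) (w : WordNE A) :
    expStarW α [w] = ∑ᶠ π ∈ {π : NPart w.1.length | IsNoncrossing π},
      (forestFactorial π : ℂ)⁻¹ * blockApply (onList α) w.1.get π := by
  classical
  simp only [blockApply_onList, expStarW]
  have h := finsum_mem_parts _ _ isNoncrossing_iff (fun P h => h.toIsPartOf)
    (fun P : Finset (Finset (Fin w.1.length)) =>
      (blocksFactorial P : ℂ)⁻¹ * blocksApply α (fun i => w.1.getD i 0) P)
  refine Eq.trans ?_ h.symm
  rw [← finsum_card_fiber]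
  simp only [← convPowW_sentenceAt hα, sentenceAt_univ]

end Exponentials

lemma sort_univ_map_get (l : List A) :
    ((Finset.univ : Finset (Fin l.length)).sort (· ≤ ·)).map l.get = l := by
  have h : (Finset.univ : Finset (Fin l.length)).sort (· ≤ ·) = List.finRange l.length := by
    have h1 : (List.finRange l.length).toFinset = Finset.univ := by
      ext
      simp
    rw [← h1, List.toFinset_sort _ (List.nodup_finRange _)]
    exact (List.pairwise_lt_finRange _).imp le_of_lt
  rw [h]
  exact List.map_get_finRange l

/-- A moment–cumulant relation in which the one-block partition has coefficient one determines
the cumulants. -/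
lemma cumulant_unique (R : ∀ n, NPart n → Prop) (c : ∀ n, NPart n → ℂ)
    (hR : ∀ n (π : NPart n), π.parts = {Finset.univ} → R n π)
    (hc : ∀ n (π : NPart n), π.parts = {Finset.univ} → c n π = 1) (f g : List A → ℂ)
    (h : ∀ w : WordNE A,
      ∑ᶠ π ∈ {π : NPart w.1.length | R _ π}, c _ π * blockApply f w.1.get π =
        ∑ᶠ π ∈ {π : NPart w.1.length | R _ π}, c _ π * blockApply g w.1.get π)
    (w : WordNE A) : f w.1 = g w.1 := by
  classical
  induction hn : w.1.length using Nat.strong_induction_on generalizing w with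
  | _ n ih =>
  subst hn
  have hw : (Finset.univ : Finset (Fin w.1.length)) ≠ ⊥ := by
    have hl : 0 < w.1.length := List.length_pos_of_ne_nil w.2
    exact Finset.nonempty_iff_ne_empty.1 ⟨⟨0, hl⟩, Finset.mem_univ _⟩
  have htop : (Finpartition.indiscrete hw).parts = {Finset.univ} := rfl
  have h1 := h w
  rw [finsum_mem_eq_finite_toFinset_sum _ (Set.toFinite _),
    finsum_mem_eq_finite_toFinset_sum _ (Set.toFinite _)] at h1
  have hmem : Finpartition.indiscrete hw ∈
      (Set.toFinite {π : NPart w.1.length | R _ π}).toFinset := by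
    simpa using hR _ _ htop
  rw [← Finset.add_sum_erase _ _ hmem, ← Finset.add_sum_erase _ _ hmem] at h1
  have h2 : ∀ F : List A → ℂ, c _ (Finpartition.indiscrete hw) *
      blockApply F w.1.get (Finpartition.indiscrete hw) = F w.1 := fun F => by
    rw [hc _ _ htop, one_mul, blockApply, htop, Finset.prod_singleton, sort_univ_map_get]
  rw [h2, h2] at h1
  refine add_right_cancel (h1.trans ?_)
  congr 1
  refine Finset.sum_congr rfl fun π hπ => ?_
  obtain ⟨hne, _⟩ := Finset.mem_erase.1 hπ
  congr 1
  refine Finset.prod_congr rfl fun V hV => ?_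
  have hVne := π.nonempty_of_mem_parts hV
  have hVu : V ≠ Finset.univ := by
    rintro rfl
    refine hne (Finpartition.ext ?_)
    rw [htop, Finset.eq_singleton_iff_unique_mem]
    refine ⟨hV, fun W hW => ?_⟩
    obtain ⟨x, hx⟩ := π.nonempty_of_mem_parts hW
    exact π.eq_of_mem_parts hW hV hx (Finset.mem_univ x)
  have hlt : V.card < w.1.length := by
    have := Finset.card_lt_univ_of_notMem (s := V) (x := (Classical.choose
      (not_forall.1 fun hall => hVu (Finset.eq_univ_iff_forall.2 hall)))) (Classical.choose_spec
      (not_forall.1 fun hall => hVu (Finset.eq_univ_iff_forall.2 hall)))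
    simpa using this
  have hnil : (V.sort (· ≤ ·)).map w.1.get ≠ [] := by
    intro h0
    have := congrArg List.length h0
    simp at this
    exact hVne.ne_empty this
  exact (ih V.card hlt ⟨_, hnil⟩ (by simp)).symm

lemma isNoncrossing_of_parts_eq {π : NPart n} (h : π.parts = {Finset.univ}) :
    IsNoncrossing π := by
  intro a b c d _ _ _ V hV W hW _ _ _ _
  rw [h, Finset.mem_singleton] at hV hW
  rw [hV, hW]

lemma isIntervalPart_of_parts_eq {π : NPart n} (h : π.parts = {Finset.univ}) :
    IsIntervalPart π := by
  intro V hV x _ y _ z _ _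
  rw [h, Finset.mem_singleton] at hV
  simp [hV]

lemma forestFactorial_of_parts_eq {π : NPart n} (h : π.parts = {Finset.univ}) :
    forestFactorial π = 1 := by
  classical
  rw [forestFactorial, h, Finset.prod_singleton, Finset.filter_true_of_mem]
  · simp
  · intro W hW
    rw [Finset.mem_singleton.1 hW]
    exact nestedIn_refl _

end Values

/-- Let `(A, φ)` be a noncommutative probability space and
`Φ : T(T_+(A)) → ℂ` the character extending `φ`. If `(κ, β, ρ)` is the (unique) triple of
infinitesimal characters with `Φ = exp^*(ρ) = E_≺(κ) = E_≻(β)`, then for every word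
`w = a_1⋯a_n ∈ T_+(A)`: `κ(w) = r_n(a_1,…,a_n)`, `β(w) = b_n(a_1,…,a_n)` and
`ρ(w) = h_n(a_1,…,a_n)`, the free, Boolean and monotone cumulants of `(A, φ)`. -/
theorem cumulant_triple_values_on_words
    (A : Type*) [Ring A] [Algebra ℂ A] (φ : A →ₗ[ℂ] ℂ) (hφ : φ 1 = 1)
    (r b h : List A → ℂ)
    (hr : FreeMC (fun x => φ x) r) (hb : BooleanMC (fun x => φ x) b)
    (hh : MonotoneMC (fun x => φ x) h)
    (κ β ρ : Sentence A → ℂ)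
    (hκ : IsInfCharW κ) (hβ : IsInfCharW β) (hρ : IsInfCharW ρ)
    (heκ : charW (fun x => φ x) = ePrecW κ)
    (heβ : charW (fun x => φ x) = eSuccW β)
    (heρ : charW (fun x => φ x) = expStarW ρ) :
    ∀ w : WordNE A, κ [w] = r w.1 ∧ β [w] = b w.1 ∧ ρ [w] = h w.1 := by
  have hlen : ∀ w : WordNE A, 1 ≤ w.1.length := fun w => List.length_pos_of_ne_nil w.2
  have hchar : ∀ w : WordNE A, charW (fun x => φ x) [w] = φ (List.ofFn w.1.get).prod := fun w => by
    rw [List.ofFn_get]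
    simp [charW]
  intro w
  refine ⟨?_, ?_, ?_⟩
  · rw [← onList_word κ w]
    refine cumulant_unique (fun _ π => IsNoncrossing π) (fun _ _ => 1)
      (fun _ _ => isNoncrossing_of_parts_eq) (fun _ _ _ => rfl) _ _ (fun v => ?_) w
    simp only [one_mul]
    rw [← ePrecW_word hκ, ← hr _ (hlen v), ← heκ, hchar]
  · rw [← onList_word β w]
    refine cumulant_unique (fun _ π => IsIntervalPart π) (fun _ _ => 1)
      (fun _ _ => isIntervalPart_of_parts_eq) (fun _ _ _ => rfl) _ _ (fun v => ?_) w
    simp only [one_mul]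
    rw [← eSuccW_word hβ, ← hb _ (hlen v), ← heβ, hchar]
  · rw [← onList_word ρ w]
    refine cumulant_unique (fun _ π => IsNoncrossing π) (fun _ π => (forestFactorial π : ℂ)⁻¹)
      (fun _ _ => isNoncrossing_of_parts_eq)
      (fun _ _ hπ => by rw [forestFactorial_of_parts_eq hπ, Nat.cast_one, inv_one])
      _ _ (fun v => ?_) w
    rw [← expStarW_word hρ, ← hh _ (hlen v), ← heρ, hchar]
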